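/- In the algebra SLF(Ū_q) with convolution product: (i) G_s = (1/[s]) χ^+_s G_1 for all 1 ≤ s ≤ p−1; (ii) χ^+_p G_1 = 0; (iii) (χ^+_s + χ^−_{p−s}) G_t = 0 for all 1 ≤ s, t ≤ p−1; (iv) the subspace V spanned by the elements χ^+_s + χ^−_{p−s} (1 ≤ s ≤ p−1), χ^+_p and χ^−_p is an ideal of SLF(Ū_q). -/

import Mathlib

noncomputable section

open scoped TensorProduct

namespace Uqsl2

/-- Generators of the restricted quantum group. -/
inductive gen : Type | E | F | K | Kinv

/-- The primitive `2p`-th root of unity `q = e^{iπ/p}`. -/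
def q (p : ℕ) : ℂ := Complex.exp (Real.pi * Complex.I / p)

/-- The `q`-integer `[n] = (q^n - q^{-n})/(q - q^{-1})`. -/
def qi (p : ℕ) (n : ℤ) : ℂ := (q p ^ n - q p ^ (-n)) / (q p - (q p)⁻¹)

/-- The `q`-factorial `[m]!`. -/
def qfact (p m : ℕ) : ℂ := ∏ i ∈ Finset.range m, qi p (i + 1)

open FreeAlgebra in
/-- The defining relations of `Ū_q(sl₂)`. -/
inductive rel (p : ℕ) : FreeAlgebra ℂ gen → FreeAlgebra ℂ gen → Prop
  | KKinv : rel p (ι ℂ gen.K * ι ℂ gen.Kinv) 1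
  | KinvK : rel p (ι ℂ gen.Kinv * ι ℂ gen.K) 1
  | Ep : rel p (ι ℂ gen.E ^ p) 0
  | Fp : rel p (ι ℂ gen.F ^ p) 0
  | K2p : rel p (ι ℂ gen.K ^ (2 * p)) 1
  | KE : rel p (ι ℂ gen.K * ι ℂ gen.E) (q p ^ 2 • (ι ℂ gen.E * ι ℂ gen.K))
  | KF : rel p (ι ℂ gen.K * ι ℂ gen.F) ((q p ^ 2)⁻¹ • (ι ℂ gen.F * ι ℂ gen.K))
  | EF : rel p (ι ℂ gen.E * ι ℂ gen.F - ι ℂ gen.F * ι ℂ gen.E)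
             ((q p - (q p)⁻¹)⁻¹ • (ι ℂ gen.K - ι ℂ gen.Kinv))

/-- The restricted quantum group `Ū_q(sl₂)`, presented by generators and relations. -/
abbrev Uq (p : ℕ) := RingQuot (rel p)

def EE (p : ℕ) : Uq p := RingQuot.mkAlgHom ℂ (rel p) (FreeAlgebra.ι ℂ gen.E)
def FF (p : ℕ) : Uq p := RingQuot.mkAlgHom ℂ (rel p) (FreeAlgebra.ι ℂ gen.F)
def KK (p : ℕ) : Uq p := RingQuot.mkAlgHom ℂ (rel p) (FreeAlgebra.ι ℂ gen.K)
def KKinv (p : ℕ) : Uq p := RingQuot.mkAlgHom ℂ (rel p) (FreeAlgebra.ι ℂ gen.Kinv)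

/-! ### The simple modules `X^α(s)` as matrix representations -/

/-- Matrix of `K` on `X^α(s)` in the canonical basis. -/
def XK (p : ℕ) (α : ℂ) (s : ℕ) : Matrix (Fin s) (Fin s) ℂ :=
  Matrix.diagonal fun i => α * q p ^ ((s : ℤ) - 1 - 2 * (i : ℕ))

/-- Matrix of `E` on `X^α(s)` in the canonical basis. -/
def XE (p : ℕ) (α : ℂ) (s : ℕ) : Matrix (Fin s) (Fin s) ℂ :=
  Matrix.of fun i j =>
    if (i : ℕ) + 1 = (j : ℕ) then α * qi p (j : ℕ) * qi p ((s : ℤ) - (j : ℕ)) else 0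

/-- Matrix of `F` on `X^α(s)` in the canonical basis. -/
def XF (s : ℕ) : Matrix (Fin s) (Fin s) ℂ :=
  Matrix.of fun i j => if (i : ℕ) = (j : ℕ) + 1 then (1 : ℂ) else 0

/-- The statement that `ρX α s` is the representation on `X^α(s)` for the relevant
values of `α` and `s`. -/
def IsXRep (p : ℕ) (ρX : (α : ℂ) → (s : ℕ) → (Uq p →ₐ[ℂ] Matrix (Fin s) (Fin s) ℂ)) : Prop :=
  ∀ α : ℂ, (α = 1 ∨ α = -1) → ∀ s : ℕ, 1 ≤ s → s ≤ p →
    ρX α s (KK p) = XK p α s ∧ ρX α s (EE p) = XE p α s ∧ ρX α s (FF p) = XF s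

/-! ### The projective modules `P^α(s)` as matrix representations -/

/-- Index for the standard basis `(b_i, x_j, y_k, a_l)` of `P^α(s)`. -/
abbrev PIdx (p s : ℕ) := Fin s ⊕ (Fin (p - s) ⊕ (Fin (p - s) ⊕ Fin s))

/-- Diagonal of the matrix of `K` on `P^α(s)`. -/
def PKdiag (p : ℕ) (α : ℂ) (s : ℕ) : PIdx p s → ℂ
  | .inl i => α * q p ^ ((s : ℤ) - 1 - 2 * (i : ℕ))
  | .inr (.inl j) => -α * q p ^ ((p : ℤ) - s - 1 - 2 * (j : ℕ))
  | .inr (.inr (.inl k)) => -α * q p ^ ((p : ℤ) - s - 1 - 2 * (k : ℕ))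
  | .inr (.inr (.inr l)) => α * q p ^ ((s : ℤ) - 1 - 2 * (l : ℕ))

/-- Matrix of `K` on `P^α(s)` in the standard basis. -/
def PK (p : ℕ) (α : ℂ) (s : ℕ) : Matrix (PIdx p s) (PIdx p s) ℂ :=
  Matrix.diagonal (PKdiag p α s)

/-- Matrix of `E` on `P^α(s)` in the standard basis. -/
def PE (p : ℕ) (α : ℂ) (s : ℕ) : Matrix (PIdx p s) (PIdx p s) ℂ :=
  Matrix.of fun i j =>
    match i, j with
    | .inl i, .inl j =>
        if (i : ℕ) + 1 = (j : ℕ) then α * qi p (j : ℕ) * qi p ((s : ℤ) - (j : ℕ)) else 0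
    | .inr (.inl jx), .inl j => if (j : ℕ) = 0 ∧ (jx : ℕ) + 1 = p - s then 1 else 0
    | .inr (.inr (.inr l)), .inl j => if (l : ℕ) + 1 = (j : ℕ) then 1 else 0
    | .inr (.inl i), .inr (.inl j) =>
        if (i : ℕ) + 1 = (j : ℕ) then -α * qi p (j : ℕ) * qi p ((p : ℤ) - s - (j : ℕ)) else 0
    | .inr (.inr (.inl i)), .inr (.inr (.inl k)) =>
        if (i : ℕ) + 1 = (k : ℕ) then -α * qi p (k : ℕ) * qi p ((p : ℤ) - s - (k : ℕ)) else 0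
    | .inr (.inr (.inr l)), .inr (.inr (.inl k)) =>
        if (k : ℕ) = 0 ∧ (l : ℕ) + 1 = s then 1 else 0
    | .inr (.inr (.inr i)), .inr (.inr (.inr l)) =>
        if (i : ℕ) + 1 = (l : ℕ) then α * qi p (l : ℕ) * qi p ((s : ℤ) - (l : ℕ)) else 0
    | _, _ => 0

/-- Matrix of `F` on `P^α(s)` in the standard basis. -/
def PF (p s : ℕ) : Matrix (PIdx p s) (PIdx p s) ℂ :=
  Matrix.of fun i j =>
    match i, j with
    | .inl i, .inl j => if (i : ℕ) = (j : ℕ) + 1 then (1 : ℂ) else 0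
    | .inr (.inr (.inl k)), .inl j => if (j : ℕ) + 1 = s ∧ (k : ℕ) = 0 then 1 else 0
    | .inr (.inl i), .inr (.inl j) => if (i : ℕ) = (j : ℕ) + 1 then 1 else 0
    | .inr (.inr (.inr l)), .inr (.inl j) => if (j : ℕ) + 1 = p - s ∧ (l : ℕ) = 0 then 1 else 0
    | .inr (.inr (.inl i)), .inr (.inr (.inl k)) => if (i : ℕ) = (k : ℕ) + 1 then 1 else 0
    | .inr (.inr (.inr i)), .inr (.inr (.inr l)) => if (i : ℕ) = (l : ℕ) + 1 then 1 else 0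
    | _, _ => 0

/-- The statement that `ρP α s` is the representation on `P^α(s)` for the relevant
values of `α` and `s`. -/
def IsPRep (p : ℕ)
    (ρP : (α : ℂ) → (s : ℕ) → (Uq p →ₐ[ℂ] Matrix (PIdx p s) (PIdx p s) ℂ)) : Prop :=
  ∀ α : ℂ, (α = 1 ∨ α = -1) → ∀ s : ℕ, 1 ≤ s → s ≤ p - 1 →
    ρP α s (KK p) = PK p α s ∧ ρP α s (EE p) = PE p α s ∧ ρP α s (FF p) = PF p s

/-! ### Symmetric linear forms, characters, and the forms `G_s` -/

/-- Symmetric linear forms. -/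
def IsSLF (p : ℕ) (φ : Uq p →ₗ[ℂ] ℂ) : Prop := ∀ x y : Uq p, φ (x * y) = φ (y * x)

/-- The character of a matrix representation. -/
def chiOf (p : ℕ) {n : Type} [Fintype n] [DecidableEq n]
    (ρ : Uq p →ₐ[ℂ] Matrix n n ℂ) : Uq p →ₗ[ℂ] ℂ :=
  (Matrix.traceLinearMap n ℂ ℂ).comp ρ.toLinearMap

/-- The matrix entry functional. -/
def entry {n : Type} (i j : n) : Matrix n n ℂ →ₗ[ℂ] ℂ where
  toFun M := M i j
  map_add' _ _ := rfl
  map_smul' _ _ := rfl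

/-- The symmetric linear form `G_s = tr H^+_s + tr H^-_{p-s}`. -/
def GOf (p : ℕ)
    (ρP : (α : ℂ) → (s : ℕ) → (Uq p →ₐ[ℂ] Matrix (PIdx p s) (PIdx p s) ℂ))
    (s : ℕ) : Uq p →ₗ[ℂ] ℂ :=
  (∑ i : Fin s,
    (entry (Sum.inr (Sum.inr (Sum.inr i))) (Sum.inl i)).comp (ρP 1 s).toLinearMap) +
  (∑ j : Fin (p - s),
    (entry (Sum.inr (Sum.inr (Sum.inr j))) (Sum.inl j)).comp (ρP (-1) (p - s)).toLinearMap)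

/-! ### Convolution product -/

/-- The convolution product of two linear forms, with respect to a comultiplication `Δ`. -/
def conv (p : ℕ) (Δ : Uq p →ₐ[ℂ] (Uq p ⊗[ℂ] Uq p)) (φ ψ : Uq p →ₗ[ℂ] ℂ) :
    Uq p →ₗ[ℂ] ℂ :=
  (LinearMap.mul' ℂ ℂ).comp ((TensorProduct.map φ ψ).comp Δ.toLinearMap)

/-- The statement that `Δ` is the comultiplication of `Ū_q(sl₂)`. -/
def IsCoprod (p : ℕ) (Δ : Uq p →ₐ[ℂ] (Uq p ⊗[ℂ] Uq p)) : Prop :=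
  Δ (EE p) = 1 ⊗ₜ[ℂ] EE p + EE p ⊗ₜ[ℂ] KK p ∧
  Δ (FF p) = FF p ⊗ₜ[ℂ] 1 + KKinv p ⊗ₜ[ℂ] FF p ∧
  Δ (KK p) = KK p ⊗ₜ[ℂ] KK p ∧
  Δ (KKinv p) = KKinv p ⊗ₜ[ℂ] KKinv p


/-- The subspace `V` spanned by `χ^+_s + χ^-_{p-s}` (`1 ≤ s ≤ p-1`), `χ^+_p`, `χ^-_p`. -/
def Vsub (p : ℕ)
    (ρX : (α : ℂ) → (s : ℕ) → (Uq p →ₐ[ℂ] Matrix (Fin s) (Fin s) ℂ)) :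
    Submodule ℂ (Uq p →ₗ[ℂ] ℂ) :=
  Submodule.span ℂ
    ((Set.range fun s : Fin (p - 1) =>
        chiOf p (ρX 1 ((s : ℕ) + 1)) + chiOf p (ρX (-1) (p - ((s : ℕ) + 1))))
      ∪ {chiOf p (ρX 1 p), chiOf p (ρX (-1) p)})


theorem q_prim (p : ℕ) (hp : 2 ≤ p) : IsPrimitiveRoot (q p) (2 * p) := by
  have h := Complex.isPrimitiveRoot_exp (2 * p) (by omega)
  have e : q p = Complex.exp (2 * Real.pi * Complex.I / ((2 * p : ℕ) : ℂ)) := by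
    unfold q
    congr 1
    have : (p : ℂ) ≠ 0 := by exact_mod_cast (by omega : p ≠ 0)
    push_cast
    field_simp
  rw [e]; exact h

theorem q_ne (p : ℕ) : q p ≠ 0 := Complex.exp_ne_zero _

theorem q_pow_two_p (p : ℕ) (hp : 2 ≤ p) : q p ^ (2 * p) = 1 := (q_prim p hp).pow_eq_one

theorem q_pow_p (p : ℕ) (hp : 2 ≤ p) : q p ^ p = -1 := by
  have h : (q p ^ p) ^ 2 = 1 := by rw [← pow_mul, mul_comm, q_pow_two_p p hp]
  rcases eq_or_eq_neg_of_sq_eq_sq (q p ^ p) 1 (by rw [h, one_pow]) with h | h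
  · exact absurd h ((q_prim p hp).pow_ne_one_of_pos_of_lt (by omega) (by omega))
  · exact h

theorem q_sq_prim (p : ℕ) (hp : 2 ≤ p) : IsPrimitiveRoot (q p ^ 2) p :=
  (q_prim p hp).pow (by omega) rfl

theorem q_sq_ne (p : ℕ) (hp : 2 ≤ p) : q p ^ 2 - 1 ≠ 0 := by
  have := (q_prim p hp).pow_ne_one_of_pos_of_lt (l := 2) (by omega) (by omega)
  exact sub_ne_zero.mpr this

/-- the scalar `q - q⁻¹` -/
def dd (p : ℕ) : ℂ := q p - (q p)⁻¹

theorem dd_ne (p : ℕ) (hp : 2 ≤ p) : dd p ≠ 0 := by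
  have h := q_sq_ne p hp
  have h0 := q_ne p
  unfold dd
  intro h1
  apply h
  field_simp at h1
  linear_combination h1

theorem qi_mul_dd (p : ℕ) (hp : 2 ≤ p) (n : ℤ) : qi p n * dd p = q p ^ n - (q p ^ n)⁻¹ := by
  have := dd_ne p hp
  unfold qi dd at *
  rw [div_mul_cancel₀ _ this, zpow_neg]

theorem qi_zero (p : ℕ) : qi p 0 = 0 := by simp [qi]

theorem qi_one (p : ℕ) (hp : 2 ≤ p) : qi p 1 = 1 := by
  have := dd_ne p hp
  unfold dd at this
  simp [qi, div_self this]

theorem qi_p (p : ℕ) (hp : 2 ≤ p) : qi p (p : ℤ) = 0 := by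
  have : qi p (p : ℤ) * dd p = 0 := by
    rw [qi_mul_dd p hp]; simp [q_pow_p p hp]
  exact (mul_eq_zero.mp this).resolve_right (dd_ne p hp)

theorem qi_ne (p : ℕ) (hp : 2 ≤ p) (s : ℕ) (h1 : 1 ≤ s) (h2 : s ≤ p - 1) : qi p (s : ℤ) ≠ 0 := by
  intro h
  have h3 := qi_mul_dd p hp s
  rw [h, zero_mul, zpow_natCast] at h3
  have h4 : q p ^ s ≠ 0 := pow_ne_zero _ (q_ne p)
  have h5 : q p ^ (s + s) = 1 := by
    rw [pow_add]; field_simp at h3; linear_combination -h3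
  exact (q_prim p hp).pow_ne_one_of_pos_of_lt (by omega) (by omega) h5

section rels
variable (p : ℕ)

theorem K_Kinv : KK p * KKinv p = 1 := by
  have := RingQuot.mkAlgHom_rel ℂ (rel.KKinv (p := p))
  simpa [KK, KKinv] using this
theorem Kinv_K : KKinv p * KK p = 1 := by
  have := RingQuot.mkAlgHom_rel ℂ (rel.KinvK (p := p))
  simpa [KK, KKinv] using this
theorem E_pow : EE p ^ p = 0 := by
  have := RingQuot.mkAlgHom_rel ℂ (rel.Ep (p := p))
  simpa [EE] using this
theorem F_pow : FF p ^ p = 0 := by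
  have := RingQuot.mkAlgHom_rel ℂ (rel.Fp (p := p))
  simpa [FF] using this
theorem K_pow : KK p ^ (2 * p) = 1 := by
  have := RingQuot.mkAlgHom_rel ℂ (rel.K2p (p := p))
  simpa [KK] using this
theorem KE : KK p * EE p = (q p ^ 2) • (EE p * KK p) := by
  have := RingQuot.mkAlgHom_rel ℂ (rel.KE (p := p))
  simpa only [KK, EE, map_mul, map_smul] using this
theorem KF : KK p * FF p = ((q p ^ 2)⁻¹) • (FF p * KK p) := by
  have := RingQuot.mkAlgHom_rel ℂ (rel.KF (p := p))
  simpa only [KK, FF, map_mul, map_smul] using this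
theorem EF : EE p * FF p = FF p * EE p + (dd p)⁻¹ • (KK p - KKinv p) := by
  have := RingQuot.mkAlgHom_rel ℂ (rel.EF (p := p))
  simp only [map_mul, map_smul, map_sub] at this
  rw [← sub_eq_iff_eq_add']
  exact this

theorem Kinv_eq (hp : 2 ≤ p) : KKinv p = KK p ^ (2 * p - 1) := by
  have h : KK p ^ (2 * p - 1) * KK p = 1 := by
    rw [← pow_succ, show 2 * p - 1 + 1 = 2 * p by omega, K_pow]
  calc KKinv p = (KK p ^ (2 * p - 1) * KK p) * KKinv p := by rw [h, one_mul]
    _ = _ := by rw [mul_assoc, K_Kinv, mul_one]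

theorem EK : EE p * KK p = ((q p ^ 2)⁻¹) • (KK p * EE p) := by
  rw [KE, smul_smul, inv_mul_cancel₀ (pow_ne_zero _ (q_ne p)), one_smul]
theorem FK : FF p * KK p = (q p ^ 2) • (KK p * FF p) := by
  rw [KF, smul_smul, mul_inv_cancel₀ (pow_ne_zero _ (q_ne p)), one_smul]
theorem EKinv : EE p * KKinv p = (q p ^ 2) • (KKinv p * EE p) := by
  calc EE p * KKinv p = KKinv p * (KK p * EE p) * KKinv p := by
        rw [← mul_assoc (KKinv p), Kinv_K, one_mul]
    _ = _ := by
        rw [KE, mul_smul_comm, smul_mul_assoc, mul_assoc, mul_assoc, K_Kinv, mul_one]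
theorem FKinv : FF p * KKinv p = ((q p ^ 2)⁻¹) • (KKinv p * FF p) := by
  calc FF p * KKinv p = KKinv p * (KK p * FF p) * KKinv p := by
        rw [← mul_assoc (KKinv p), Kinv_K, one_mul]
    _ = _ := by
        rw [KF, mul_smul_comm, smul_mul_assoc, mul_assoc, mul_assoc, K_Kinv, mul_one]

theorem mem_sub (hp : 2 ≤ p) (S : Subalgebra ℂ (Uq p)) (hE : EE p ∈ S) (hF : FF p ∈ S)
    (hK : KK p ∈ S) (x : Uq p) : x ∈ S := by
  obtain ⟨y, rfl⟩ := RingQuot.mkAlgHom_surjective ℂ (rel p) x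
  induction y using FreeAlgebra.induction with
  | grade0 r => rw [AlgHom.commutes]; exact S.algebraMap_mem r
  | grade1 g =>
    cases g
    · exact hE
    · exact hF
    · exact hK
    · change KKinv p ∈ S
      rw [Kinv_eq p hp]; exact S.pow_mem hK _
  | mul a b ha hb => rw [map_mul]; exact S.mul_mem ha hb
  | add a b ha hb => rw [map_add]; exact S.add_mem ha hb

/-- Induction principle for `Uq`. -/
theorem Uq_ind (hp : 2 ≤ p) {P : Uq p → Prop} (hE : P (EE p)) (hF : P (FF p)) (hK : P (KK p))
    (hc : ∀ c : ℂ, P (algebraMap ℂ _ c)) (hadd : ∀ x y, P x → P y → P (x + y))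
    (hmul : ∀ x y, P x → P y → P (x * y)) (x : Uq p) : P x := by
  let S : Subalgebra ℂ (Uq p) :=
    { carrier := {x | P x}
      mul_mem' := fun {a b} ha hb => hmul a b ha hb
      add_mem' := fun {a b} ha hb => hadd a b ha hb
      algebraMap_mem' := hc }
  exact mem_sub p hp S hE hF hK x

theorem Uq_hom_ext (hp : 2 ≤ p) {A : Type*} [Semiring A] [Algebra ℂ A] (f g : Uq p →ₐ[ℂ] A)
    (hE : f (EE p) = g (EE p)) (hF : f (FF p) = g (FF p)) (hK : f (KK p) = g (KK p)) : f = g := by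
  apply AlgHom.ext
  intro x
  induction x using Uq_ind p hp with
  | hE => exact hE
  | hF => exact hF
  | hK => exact hK
  | hc c => simp
  | hadd x y hx hy => simp [hx, hy]
  | hmul x y hx hy => simp [hx, hy]

theorem K_F_pow (i : ℕ) : KK p * FF p ^ i = ((q p ^ (2 * i))⁻¹) • (FF p ^ i * KK p) := by
  induction i with
  | zero => simp
  | succ i ih =>
    rw [pow_succ, ← mul_assoc, ih, smul_mul_assoc, mul_assoc, KF, mul_smul_comm, smul_smul,
      ← mul_assoc]
    congr 1
    rw [← mul_inv, ← pow_add]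
    congr 2

theorem K_E_pow (i : ℕ) : KK p * EE p ^ i = ((q p ^ (2 * i))) • (EE p ^ i * KK p) := by
  induction i with
  | zero => simp
  | succ i ih =>
    rw [pow_succ, ← mul_assoc, ih, smul_mul_assoc, mul_assoc, KE, mul_smul_comm, smul_smul,
      ← mul_assoc]
    congr 1
    rw [← pow_add]
    congr 2

theorem Kc_E (c : ℕ) : KK p ^ c * EE p = ((q p ^ (2 * c))) • (EE p * KK p ^ c) := by
  induction c with
  | zero => simp
  | succ i ih =>
    rw [pow_succ, mul_assoc, KE, mul_smul_comm, ← mul_assoc, ih, smul_mul_assoc, smul_smul,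
      mul_assoc]
    congr 1
    rw [← pow_add]
    congr 1; ring

theorem Kc_F (c : ℕ) : KK p ^ c * FF p = ((q p ^ (2 * c))⁻¹) • (FF p * KK p ^ c) := by
  induction c with
  | zero => simp
  | succ i ih =>
    rw [pow_succ, mul_assoc, KF, mul_smul_comm, ← mul_assoc, ih, smul_mul_assoc, smul_smul,
      mul_assoc]
    congr 1
    rw [← mul_inv, ← pow_add]
    congr 2; ring

theorem Kinv_F_pow (i : ℕ) : KKinv p * FF p ^ i = ((q p ^ (2 * i))) • (FF p ^ i * KKinv p) := by
  have h : KKinv p * (KK p * FF p ^ i) * KKinv p = FF p ^ i * KKinv p := by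
    rw [← mul_assoc, Kinv_K, one_mul]
  rw [← h, K_F_pow, mul_smul_comm, smul_mul_assoc, mul_assoc, mul_assoc, K_Kinv, mul_one, smul_smul,
    mul_inv_cancel₀ (pow_ne_zero _ (q_ne p)), one_smul]

theorem E_F_pow (hp : 2 ≤ p) (i : ℕ) : EE p * FF p ^ (i + 1) = FF p ^ (i + 1) * EE p +
    (qi p ((i : ℤ) + 1) * (dd p)⁻¹) • (FF p ^ i * ((q p ^ i)⁻¹ • KK p - q p ^ i • KKinv p)) := by
  induction i with
  | zero =>
    simp only [zero_add, pow_one, pow_zero, inv_one, one_smul, one_mul, Nat.cast_zero, qi_one p hp]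
    exact EF p
  | succ i ih =>
    rw [pow_succ (FF p) (i + 1), ← mul_assoc, ih, add_mul, mul_assoc, EF, mul_add, smul_mul_assoc,
      mul_assoc (FF p ^ i), sub_mul, smul_mul_assoc, smul_mul_assoc]
    have hq := q_ne p
    have hd := dd_ne p hp
    have e1 := KF p
    have e2 : KKinv p * FF p = (q p ^ 2) • (FF p * KKinv p) := by
      simpa using Kinv_F_pow p 1
    rw [e1, e2]
    have e3 := qi_mul_dd p hp ((i : ℤ) + 1)
    have e4 := qi_mul_dd p hp (((i + 1 : ℕ) : ℤ) + 1)
    rw [← eq_div_iff hd] at e3 e4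
    rw [e3, e4]
    have hd2 : q p ^ 2 - 1 ≠ 0 := q_sq_ne p hp
    simp only [mul_sub, mul_smul_comm, ← mul_assoc, ← pow_succ]
    have z1 : q p ^ ((i : ℤ) + 1) = q p ^ i * q p := by rw [zpow_add₀ hq]; simp
    have z2 : q p ^ (((i + 1 : ℕ) : ℤ) + 1) = q p ^ i * q p * q p := by
      rw [zpow_add₀ hq, zpow_natCast, pow_succ]; simp
    rw [z1, z2, pow_succ (q p) i]
    have hi : q p ^ i ≠ 0 := pow_ne_zero _ hq
    unfold dd
    generalize q p ^ i = y at *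
    match_scalars <;> field_simp <;> ring

/-- The (rescaled) Casimir element. -/
def tt : Uq p := (dd p ^ 2) • (FF p * EE p) + q p • KK p + (q p)⁻¹ • KKinv p

theorem tt_E (hp : 2 ≤ p) : EE p * tt p = tt p * EE p := by
  have hq := q_ne p
  have hd := dd_ne p hp
  unfold tt
  simp only [mul_add, add_mul, mul_smul_comm, smul_mul_assoc]
  rw [← mul_assoc (EE p), EF, EK, EKinv]
  simp only [add_mul, sub_mul, smul_mul_assoc, mul_assoc]
  have e : (dd p)⁻¹ * dd p ^ 2 = q p - (q p)⁻¹ := by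
    change _ = dd p
    field_simp
  rw [smul_add, smul_smul, mul_comm, e]
  match_scalars <;> field_simp <;> ring

theorem tt_F (hp : 2 ≤ p) : FF p * tt p = tt p * FF p := by
  have hq := q_ne p
  have hd := dd_ne p hp
  unfold tt
  simp only [mul_add, add_mul, mul_smul_comm, smul_mul_assoc]
  rw [mul_assoc (FF p) (EE p), EF, FK, FKinv]
  simp only [mul_add, mul_sub, mul_smul_comm]
  rw [FK, FKinv]
  have e : dd p ^ 2 * (dd p)⁻¹ = q p - (q p)⁻¹ := by
    change _ = dd p
    field_simp
  rw [smul_add, smul_smul _ (dd p)⁻¹, e]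
  match_scalars <;> field_simp <;> ring

theorem tt_K : KK p * tt p = tt p * KK p := by
  have hq := q_ne p
  unfold tt
  simp only [mul_add, add_mul, mul_smul_comm, smul_mul_assoc]
  rw [← mul_assoc (KK p), KF, smul_mul_assoc, mul_assoc, KE, mul_smul_comm,
    smul_smul _ (q p ^ 2), K_Kinv, Kinv_K, inv_mul_cancel₀ (pow_ne_zero _ hq), one_smul, mul_assoc]

theorem tt_comm (hp : 2 ≤ p) (x : Uq p) : x * tt p = tt p * x := by
  induction x using Uq_ind p hp with
  | hE => exact tt_E p hp
  | hF => exact tt_F p hp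
  | hK => exact tt_K p
  | hc c => exact Algebra.commutes _ _
  | hadd x y hx hy => rw [add_mul, mul_add, hx, hy]
  | hmul x y hx hy => rw [mul_assoc, hy, ← mul_assoc, hx, mul_assoc]

end rels

theorem pbw_mem (p : ℕ) (hp : 2 ≤ p) (x : Uq p) : x ∈ Submodule.span ℂ
    (Set.range fun n : ℕ × ℕ × ℕ => FF p ^ n.1 * EE p ^ n.2.1 * KK p ^ n.2.2) := by
  set W := Submodule.span ℂ
    (Set.range fun n : ℕ × ℕ × ℕ => FF p ^ n.1 * EE p ^ n.2.1 * KK p ^ n.2.2) with hW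
  have hb : ∀ a b c : ℕ, FF p ^ a * EE p ^ b * KK p ^ c ∈ W := fun a b c =>
    Submodule.subset_span ⟨(a, b, c), rfl⟩
  have key : ∀ u : Uq p, (∀ a b c : ℕ, u * (FF p ^ a * EE p ^ b * KK p ^ c) ∈ W) →
      ∀ w ∈ W, u * w ∈ W := by
    intro u hu w hw
    induction hw using Submodule.span_induction with
    | mem w h => obtain ⟨n, rfl⟩ := h; exact hu _ _ _
    | zero => simp
    | add x y _ _ hx hy => rw [mul_add]; exact W.add_mem hx hy
    | smul c x _ hx => rw [mul_smul_comm]; exact W.smul_mem _ hx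
  have hKE : ∀ a b c : ℕ, FF p ^ a * (KK p * (EE p ^ b * KK p ^ c)) ∈ W := by
    intro a b c
    rw [← mul_assoc (KK p), K_E_pow, smul_mul_assoc, mul_smul_comm, mul_assoc (EE p ^ b),
      ← pow_succ', ← mul_assoc]
    exact W.smul_mem _ (hb _ _ _)
  have hK : ∀ a b c : ℕ, KK p * (FF p ^ a * EE p ^ b * KK p ^ c) ∈ W := by
    intro a b c
    rw [mul_assoc, ← mul_assoc (KK p), K_F_pow, smul_mul_assoc, mul_assoc]
    exact W.smul_mem _ (hKE _ _ _)
  have hKE' : ∀ m a b c : ℕ, FF p ^ a * (KK p ^ m * (EE p ^ b * KK p ^ c)) ∈ W := by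
    intro m a b
    induction m with
    | zero => intro c; rw [pow_zero, one_mul, ← mul_assoc]; exact hb _ _ _
    | succ m ih =>
      intro c
      rw [pow_succ, mul_assoc, ← mul_assoc (KK p), K_E_pow, smul_mul_assoc, mul_assoc (EE p ^ b),
        ← pow_succ', mul_smul_comm, mul_smul_comm]
      exact W.smul_mem _ (ih _)
  have hF : ∀ a b c : ℕ, FF p * (FF p ^ a * EE p ^ b * KK p ^ c) ∈ W := by
    intro a b c
    rw [← mul_assoc, ← mul_assoc, ← pow_succ']; exact hb _ _ _
  have hE : ∀ a b c : ℕ, EE p * (FF p ^ a * EE p ^ b * KK p ^ c) ∈ W := by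
    intro a b c
    rcases a with _ | a
    · rw [pow_zero, one_mul, ← mul_assoc, ← pow_succ']
      simpa using hb 0 (b + 1) c
    · rw [mul_assoc, ← mul_assoc (EE p), E_F_pow p hp, add_mul]
      refine W.add_mem ?_ ?_
      · rw [mul_assoc, ← mul_assoc (EE p), ← pow_succ', ← mul_assoc]; exact hb _ _ _
      · rw [smul_mul_assoc, mul_assoc, sub_mul, mul_sub, smul_mul_assoc, smul_mul_assoc,
          mul_smul_comm, mul_smul_comm]
        refine W.smul_mem _ (W.sub_mem (W.smul_mem _ (hKE _ _ _)) (W.smul_mem _ ?_))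
        rw [Kinv_eq p hp]; exact hKE' _ _ _ _
  have main : ∀ u : Uq p, ∀ w ∈ W, u * w ∈ W := by
    intro u
    induction u using Uq_ind p hp with
    | hE => exact key _ hE
    | hF => exact key _ hF
    | hK => exact key _ hK
    | hc c => intro w hw; rw [← Algebra.smul_def]; exact W.smul_mem _ hw
    | hadd x y hx hy => intro w hw; rw [add_mul]; exact W.add_mem (hx _ hw) (hy _ hw)
    | hmul x y hx hy => intro w hw; rw [mul_assoc]; exact hx _ (hy _ hw)
  have := main x 1 (by simpa using hb 0 0 0)
  simpa using this

theorem tK_mem (p : ℕ) (hp : 2 ≤ p) (a c : ℕ) : FF p ^ a * EE p ^ a * KK p ^ c ∈ Submodule.span ℂ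
    (Set.range fun n : ℕ × ℕ => tt p ^ n.1 * KK p ^ n.2) := by
  set L := Submodule.span ℂ (Set.range fun n : ℕ × ℕ => tt p ^ n.1 * KK p ^ n.2) with hL
  have hb : ∀ a c : ℕ, tt p ^ a * KK p ^ c ∈ L := fun a c => Submodule.subset_span ⟨(a, c), rfl⟩
  have hd := dd_ne p hp
  have hFE : FF p * EE p = ((dd p ^ 2)⁻¹) • (tt p - q p • KK p - (q p)⁻¹ • KKinv p) := by
    unfold tt
    rw [eq_inv_smul_iff₀ (pow_ne_zero _ hd)]
    abel
  have h1 : ∀ y ∈ L, ∀ c, y * KK p ^ c ∈ L := by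
    intro y hy c
    induction hy using Submodule.span_induction with
    | mem w h =>
      obtain ⟨n, rfl⟩ := h
      simp only [mul_assoc, ← pow_add]
      exact hb _ _
    | zero => simp
    | add x y _ _ hx hy => rw [add_mul]; exact L.add_mem hx hy
    | smul c x _ hx => rw [smul_mul_assoc]; exact L.smul_mem _ hx
  have hcomm : ∀ (a : ℕ) (x : Uq p), x * tt p ^ a = tt p ^ a * x := fun a x =>
    (Commute.pow_right (tt_comm p hp x : Commute x (tt p)) a)
  have h2 : ∀ y ∈ L, FF p * y * EE p ∈ L := by
    intro y hy
    induction hy using Submodule.span_induction with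
    | mem w h =>
      obtain ⟨⟨a, c⟩, rfl⟩ := h
      simp only
      rw [← mul_assoc, hcomm, mul_assoc, Kc_E, mul_smul_comm, mul_assoc, ← mul_assoc (FF p), hFE,
        smul_mul_assoc, mul_smul_comm, sub_mul, sub_mul, mul_sub, mul_sub, smul_mul_assoc,
        smul_mul_assoc, mul_smul_comm, mul_smul_comm, ← mul_assoc, ← pow_succ, ← pow_succ',
        Kinv_eq p hp, ← pow_add]
      exact L.smul_mem _ (L.smul_mem _ (L.sub_mem (L.sub_mem (hb _ _) (L.smul_mem _ (hb _ _)))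
        (L.smul_mem _ (hb _ _))))
    | zero => simp
    | add x y _ _ hx hy => rw [mul_add, add_mul]; exact L.add_mem hx hy
    | smul c x _ hx => rw [mul_smul_comm, smul_mul_assoc]; exact L.smul_mem _ hx
  apply h1
  induction a with
  | zero => simpa using hb 0 0
  | succ a ih =>
    rw [pow_succ' (FF p), pow_succ (EE p), mul_assoc, ← mul_assoc (FF p ^ a), ← mul_assoc]
    exact h2 _ ih

theorem slf_weight (p : ℕ) (hp : 2 ≤ p) (ψ : Uq p →ₗ[ℂ] ℂ) (hψ : IsSLF p ψ) (a b c : ℕ)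
    (ha : a < p) (hb : b < p) (hab : a ≠ b) : ψ (FF p ^ a * EE p ^ b * KK p ^ c) = 0 := by
  set y := FF p ^ a * EE p ^ b * KK p ^ (c + (2 * p - 1)) with hy
  have e1 : y * KK p = FF p ^ a * EE p ^ b * KK p ^ c := by
    rw [hy, mul_assoc, ← pow_succ, show c + (2 * p - 1) + 1 = c + 2 * p by omega, pow_add, K_pow,
      mul_one]
  have e2 : KK p * y = ((q p ^ (2 * a))⁻¹ * q p ^ (2 * b)) • (y * KK p) := by
    rw [hy, mul_assoc, ← mul_assoc (KK p), K_F_pow, smul_mul_assoc, mul_assoc, ← mul_assoc (KK p),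
      K_E_pow, smul_mul_assoc, mul_smul_comm, smul_smul]
    congr 1
    simp only [mul_assoc, ← pow_succ, ← pow_succ']
  have h := hψ (KK p) y
  rw [e2, map_smul, e1, smul_eq_mul] at h
  have h' : ((q p ^ (2 * a))⁻¹ * q p ^ (2 * b) - 1) * ψ (FF p ^ a * EE p ^ b * KK p ^ c) = 0 := by
    linear_combination h
  refine (mul_eq_zero.mp h').resolve_left ?_
  intro h0
  have hne : q p ^ (2 * a) ≠ 0 := pow_ne_zero _ (q_ne p)
  have : (q p ^ 2) ^ b = (q p ^ 2) ^ a := by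
    rw [← pow_mul, ← pow_mul]; field_simp at h0; linear_combination h0
  exact hab ((q_sq_prim p hp).pow_inj hb ha this).symm

theorem slf_zero (p : ℕ) (hp : 2 ≤ p) (ψ : Uq p →ₗ[ℂ] ℂ) (hψ : IsSLF p ψ)
    (h : ∀ a c : ℕ, ψ (tt p ^ a * KK p ^ c) = 0) : ψ = 0 := by
  ext1 x
  have hx := pbw_mem p hp x
  rw [LinearMap.zero_apply]
  induction hx using Submodule.span_induction with
  | mem x hx =>
    obtain ⟨⟨a, b, c⟩, rfl⟩ := hx
    simp only
    by_cases ha : a < p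
    · by_cases hb : b < p
      · by_cases hab : a = b
        · subst hab
          have h2 := tK_mem p hp a c
          generalize FF p ^ a * EE p ^ a * KK p ^ c = z at h2 ⊢
          induction h2 using Submodule.span_induction with
          | mem x hx => obtain ⟨⟨a, c⟩, rfl⟩ := hx; exact h a c
          | zero => simp
          | add x y _ _ hx hy => rw [map_add, hx, hy, add_zero]
          | smul c x _ hx => rw [map_smul, hx, smul_zero]
        · exact slf_weight p hp ψ hψ a b c ha hb hab
      · rw [show b = p + (b - p) by omega, pow_add (EE p), E_pow]; simp
    · rw [show a = p + (a - p) by omega, pow_add (FF p), F_pow]; simp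
  | zero => simp
  | add x y _ _ hx hy => rw [map_add, hx, hy, add_zero]
  | smul c x _ hx => rw [map_smul, hx, smul_zero]

/-- If the Casimir satisfies a quadratic equation on `ψ`, two values are enough. -/
theorem slf_zero2 (p : ℕ) (hp : 2 ≤ p) (ψ : Uq p →ₗ[ℂ] ℂ) (hψ : IsSLF p ψ) (u v : ℂ)
    (hq : ∀ x, ψ (tt p * (tt p * x)) = u * ψ (tt p * x) + v * ψ x)
    (h0 : ∀ c : ℕ, ψ (KK p ^ c) = 0) (h1 : ∀ c : ℕ, ψ (tt p * KK p ^ c) = 0) : ψ = 0 := by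
  apply slf_zero p hp ψ hψ
  intro a c
  have : ψ (tt p ^ a * KK p ^ c) = 0 ∧ ψ (tt p ^ (a + 1) * KK p ^ c) = 0 := by
    induction a with
    | zero => simp [h0, h1]
    | succ a ih =>
      refine ⟨ih.2, ?_⟩
      rw [pow_succ', pow_succ', mul_assoc, mul_assoc, hq, ← mul_assoc, ← pow_succ', ih.1, ih.2]
      simp
  exact this.1

section convs
variable (p : ℕ) (Δ : Uq p →ₐ[ℂ] (Uq p ⊗[ℂ] Uq p))

theorem conv_slf (φ ψ : Uq p →ₗ[ℂ] ℂ) (h1 : IsSLF p φ) (h2 : IsSLF p ψ) :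
    IsSLF p (conv p Δ φ ψ) := by
  have key : ∀ X Y : Uq p ⊗[ℂ] Uq p, LinearMap.mul' ℂ ℂ (TensorProduct.map φ ψ (X * Y)) =
      LinearMap.mul' ℂ ℂ (TensorProduct.map φ ψ (Y * X)) := by
    intro X Y
    induction X using TensorProduct.induction_on with
    | zero => simp
    | add a b ha hb => simp only [add_mul, mul_add, map_add, ha, hb]
    | tmul a b =>
      induction Y using TensorProduct.induction_on with
      | zero => simp
      | add a b ha hb => simp only [add_mul, mul_add, map_add, ha, hb]
      | tmul c d => simp [h1 a c, h2 b d]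
  intro x y
  simp only [conv, LinearMap.comp_apply, AlgHom.toLinearMap_apply, map_mul]
  exact key _ _

theorem chi_slf {n : Type} [Fintype n] [DecidableEq n] (ρ : Uq p →ₐ[ℂ] Matrix n n ℂ) :
    IsSLF p (chiOf p ρ) := by
  intro x y
  simp [chiOf, Matrix.trace_mul_comm (ρ x)]

theorem conv_add_left (a b c : Uq p →ₗ[ℂ] ℂ) :
    conv p Δ (a + b) c = conv p Δ a c + conv p Δ b c := by
  unfold conv; rw [TensorProduct.map_add_left, LinearMap.add_comp, LinearMap.comp_add]
theorem conv_add_right (a b c : Uq p →ₗ[ℂ] ℂ) :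
    conv p Δ a (b + c) = conv p Δ a b + conv p Δ a c := by
  unfold conv; rw [TensorProduct.map_add_right, LinearMap.add_comp, LinearMap.comp_add]
theorem conv_smul_right (a b : Uq p →ₗ[ℂ] ℂ) (r : ℂ) :
    conv p Δ a (r • b) = r • conv p Δ a b := by
  unfold conv; rw [TensorProduct.map_smul_right, LinearMap.smul_comp, LinearMap.comp_smul]
theorem conv_zero_left (a : Uq p →ₗ[ℂ] ℂ) : conv p Δ 0 a = 0 := by
  unfold conv; rw [TensorProduct.map_zero_left, LinearMap.zero_comp, LinearMap.comp_zero]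
theorem conv_zero_right (a : Uq p →ₗ[ℂ] ℂ) : conv p Δ a 0 = 0 := by
  unfold conv; rw [TensorProduct.map_zero_right, LinearMap.zero_comp, LinearMap.comp_zero]

variable {n : Type} [Fintype n] [DecidableEq n] (ρ : Uq p →ₐ[ℂ] Matrix n n ℂ)

/-- constant matrices -/
def cm : Uq p →ₐ[ℂ] Matrix n n (Uq p) := (Algebra.ofId ℂ (Uq p)).mapMatrix.comp ρ

theorem cm_sc_comm (x y : Uq p) : Commute (cm p ρ x) (Matrix.scalarAlgHom n ℂ y) := by
  ext i j : 1
  simp [cm, Matrix.scalar_apply, Matrix.mul_diagonal, Matrix.diagonal_mul, Algebra.ofId_apply,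
    Algebra.commutes]

theorem cm_sc_apply (x y : Uq p) (i j : n) :
    (cm p ρ x * Matrix.scalarAlgHom n ℂ y) i j = ρ x i j • y := by
  simp [cm, Matrix.scalar_apply, Matrix.mul_diagonal, Algebra.ofId_apply, Algebra.smul_def]

/-- `(ρ ⊗ id) Δ` -/
def DL : Uq p →ₐ[ℂ] Matrix n n (Uq p) :=
  (Algebra.TensorProduct.lift (cm p ρ) (Matrix.scalarAlgHom n ℂ) (cm_sc_comm p ρ)).comp Δ

/-- `(id ⊗ ρ) Δ` -/
def DR : Uq p →ₐ[ℂ] Matrix n n (Uq p) :=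
  (Algebra.TensorProduct.lift (Matrix.scalarAlgHom n ℂ) (cm p ρ)
    (fun x y => (cm_sc_comm p ρ y x).symm)).comp Δ

theorem conv_DL (φ : Uq p →ₗ[ℂ] ℂ) (x : Uq p) :
    conv p Δ (chiOf p ρ) φ x = φ (DL p Δ ρ x).trace := by
  have key : ∀ X : Uq p ⊗[ℂ] Uq p, LinearMap.mul' ℂ ℂ (TensorProduct.map (chiOf p ρ) φ X) =
      φ (Algebra.TensorProduct.lift (cm p ρ) (Matrix.scalarAlgHom n ℂ) (cm_sc_comm p ρ) X).trace := by
    intro X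
    induction X using TensorProduct.induction_on with
    | zero => simp
    | add a b ha hb => simp only [map_add, ha, hb, Matrix.trace_add]
    | tmul a b =>
      rw [Algebra.TensorProduct.lift_tmul, Matrix.trace]
      simp only [Matrix.diag_apply, cm_sc_apply, map_sum, map_smul]
      simp [chiOf, Matrix.trace, Finset.sum_mul]
  exact key _

theorem conv_DR (φ : Uq p →ₗ[ℂ] ℂ) (x : Uq p) :
    conv p Δ φ (chiOf p ρ) x = φ (DR p Δ ρ x).trace := by
  have key : ∀ X : Uq p ⊗[ℂ] Uq p, LinearMap.mul' ℂ ℂ (TensorProduct.map φ (chiOf p ρ) X) =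
      φ (Algebra.TensorProduct.lift (Matrix.scalarAlgHom n ℂ) (cm p ρ)
        (fun x y => (cm_sc_comm p ρ y x).symm) X).trace := by
    intro X
    induction X using TensorProduct.induction_on with
    | zero => simp
    | add a b ha hb => simp only [map_add, ha, hb, Matrix.trace_add]
    | tmul a b =>
      rw [Algebra.TensorProduct.lift_tmul, ← (cm_sc_comm p ρ b a).eq, Matrix.trace]
      simp only [Matrix.diag_apply, cm_sc_apply, map_sum, map_smul]
      simp [chiOf, Matrix.trace, Finset.mul_sum, mul_comm]
  exact key _

theorem DL_E (hΔ : IsCoprod p Δ) (i j : n) : DL p Δ ρ (EE p) i j = (1 : Matrix n n ℂ) i j • EE p + ρ (EE p) i j • KK p := by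
  rw [DL, AlgHom.comp_apply, hΔ.1, map_add, Algebra.TensorProduct.lift_tmul,
    Algebra.TensorProduct.lift_tmul, Matrix.add_apply, cm_sc_apply, cm_sc_apply, map_one]
theorem DL_F (hΔ : IsCoprod p Δ) (i j : n) : DL p Δ ρ (FF p) i j = ρ (FF p) i j • 1 + ρ (KKinv p) i j • FF p := by
  rw [DL, AlgHom.comp_apply, hΔ.2.1, map_add, Algebra.TensorProduct.lift_tmul,
    Algebra.TensorProduct.lift_tmul, Matrix.add_apply, cm_sc_apply, cm_sc_apply]
theorem DL_K (hΔ : IsCoprod p Δ) (i j : n) : DL p Δ ρ (KK p) i j = ρ (KK p) i j • KK p := by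
  rw [DL, AlgHom.comp_apply, hΔ.2.2.1, Algebra.TensorProduct.lift_tmul, cm_sc_apply]
theorem DL_Kinv (hΔ : IsCoprod p Δ) (i j : n) : DL p Δ ρ (KKinv p) i j = ρ (KKinv p) i j • KKinv p := by
  rw [DL, AlgHom.comp_apply, hΔ.2.2.2, Algebra.TensorProduct.lift_tmul, cm_sc_apply]
theorem DR_E (hΔ : IsCoprod p Δ) (i j : n) : DR p Δ ρ (EE p) i j = ρ (EE p) i j • 1 + ρ (KK p) i j • EE p := by
  rw [DR, AlgHom.comp_apply, hΔ.1, map_add, Algebra.TensorProduct.lift_tmul,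
    Algebra.TensorProduct.lift_tmul, Matrix.add_apply, ← (cm_sc_comm p ρ _ _).eq,
    ← (cm_sc_comm p ρ _ _).eq, cm_sc_apply, cm_sc_apply]
theorem DR_F (hΔ : IsCoprod p Δ) (i j : n) : DR p Δ ρ (FF p) i j =
    (1 : Matrix n n ℂ) i j • FF p + ρ (FF p) i j • KKinv p := by
  rw [DR, AlgHom.comp_apply, hΔ.2.1, map_add, Algebra.TensorProduct.lift_tmul,
    Algebra.TensorProduct.lift_tmul, Matrix.add_apply, ← (cm_sc_comm p ρ _ _).eq,
    ← (cm_sc_comm p ρ _ _).eq, cm_sc_apply, cm_sc_apply, map_one]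
theorem DR_K (hΔ : IsCoprod p Δ) (i j : n) : DR p Δ ρ (KK p) i j = ρ (KK p) i j • KK p := by
  rw [DR, AlgHom.comp_apply, hΔ.2.2.1, Algebra.TensorProduct.lift_tmul,
    ← (cm_sc_comm p ρ _ _).eq, cm_sc_apply]

end convs

theorem strict_pow {R : Type*} [Ring R] {m : ℕ} (N : Matrix (Fin m) (Fin m) R) (f : Fin m → ℤ)
    (h : ∀ i j, ¬ (f i + 1 ≤ f j) → N i j = 0) (k : ℕ) (i j : Fin m) (hij : ¬ (f i + k ≤ f j)) :
    (N ^ k) i j = 0 := by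
  induction k generalizing i j with
  | zero =>
    have : i ≠ j := by rintro rfl; simp at hij
    simp [this]
  | succ k ih =>
    rw [pow_succ, Matrix.mul_apply]
    apply Finset.sum_eq_zero
    intro l _
    by_cases h1 : f i + k ≤ f l
    · rw [h l j (by push_cast at hij; omega), mul_zero]
    · rw [ih i l h1, zero_mul]

theorem strict_upper_pow {R : Type*} [Ring R] {m : ℕ} (N : Matrix (Fin m) (Fin m) R)
    (h : ∀ i j : Fin m, ¬ (i : ℕ) < (j : ℕ) → N i j = 0) : N ^ m = 0 := by
  ext i j
  exact strict_pow N (fun i => ((i : ℕ) : ℤ)) (fun i j hij => h i j (by omega)) m i j (by omega)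

theorem strict_lower_pow {R : Type*} [Ring R] {m : ℕ} (N : Matrix (Fin m) (Fin m) R)
    (h : ∀ i j : Fin m, ¬ (j : ℕ) < (i : ℕ) → N i j = 0) : N ^ m = 0 := by
  ext i j
  exact strict_pow N (fun i => -((i : ℕ) : ℤ)) (fun i j hij => h i j (by omega)) m i j (by omega)

section verma
variable (p : ℕ)

/-- coefficient of `E` on the Verma module -/
def ve (l : ℂ) (j : ℕ) : ℂ :=
  qi p (j : ℤ) * (l * q p * (q p ^ j)⁻¹ - l⁻¹ * (q p)⁻¹ * q p ^ j) * (dd p)⁻¹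

/-- generators on the Verma module -/
def vgen (l : ℂ) : gen → Matrix (Fin p) (Fin p) ℂ
  | .E => Matrix.of fun i j => if (i : ℕ) + 1 = (j : ℕ) then ve p l j else 0
  | .F => XF p
  | .K => Matrix.diagonal fun i => l * (q p ^ (2 * (i : ℕ)))⁻¹
  | .Kinv => Matrix.diagonal fun i => l⁻¹ * (q p ^ (2 * (i : ℕ)))

theorem ve_succ (hp : 2 ≤ p) (l : ℂ) (hl : l ≠ 0) (i : ℕ) :
    ve p l (i + 1) - ve p l i = (dd p)⁻¹ * (l * (q p ^ (2 * i))⁻¹ - l⁻¹ * q p ^ (2 * i)) := by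
  have hq := q_ne p
  have hd := dd_ne p hp
  have e3 := qi_mul_dd p hp (i : ℤ)
  have e4 := qi_mul_dd p hp ((i + 1 : ℕ) : ℤ)
  rw [← eq_div_iff hd] at e3 e4
  have hi : q p ^ i ≠ 0 := pow_ne_zero _ hq
  have hd2 : q p ^ 2 - 1 ≠ 0 := q_sq_ne p hp
  unfold ve
  rw [e3, e4, zpow_natCast, zpow_natCast, pow_succ, mul_comm 2 i, pow_mul]
  unfold dd
  generalize q p ^ i = y at *
  field_simp
  ring

theorem ve_zero (l : ℂ) : ve p l 0 = 0 := by simp [ve, qi_zero]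
theorem ve_p (hp : 2 ≤ p) (l : ℂ) : ve p l p = 0 := by simp [ve, qi_p p hp]

theorem sum_shift_F {R : Type*} [NonAssocSemiring R] {m : ℕ} (A : Fin m → R) (j : Fin m) :
    (∑ k : Fin m, A k * (if (k : ℕ) = (j : ℕ) + 1 then 1 else 0)) =
      if h : (j : ℕ) + 1 < m then A ⟨j + 1, h⟩ else 0 := by
  split_ifs with h
  · rw [Finset.sum_eq_single ⟨j + 1, h⟩]
    · simp
    · intro b _ hb
      rw [if_neg, mul_zero]
      intro h'; exact hb (Fin.ext h')
    · simp
  · apply Finset.sum_eq_zero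
    intro k _
    rw [if_neg, mul_zero]
    omega

theorem vgen_EF_apply (l : ℂ) (i j : Fin p) (hp : 2 ≤ p) : (vgen p l .E * vgen p l .F) i j =
    if i = j then ve p l (i + 1) else 0 := by
  rw [Matrix.mul_apply]
  simp only [vgen, XF, Matrix.of_apply]
  rw [sum_shift_F]
  by_cases h3 : i = j
  · subst h3
    rw [if_pos rfl]
    by_cases h1 : (i : ℕ) + 1 < p
    · rw [dif_pos h1, if_pos rfl]
    · have : (i : ℕ) + 1 = p := by have := i.2; omega
      rw [dif_neg h1, this, ve_p p hp]
  · rw [if_neg h3]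
    split_ifs with h1 h2
    · exact absurd (Fin.ext (by simpa using h2)) h3
    · rfl
    · rfl

theorem vgen_FE_apply (l : ℂ) (i j : Fin p) : (vgen p l .F * vgen p l .E) i j =
    if i = j then ve p l i else 0 := by
  rw [Matrix.mul_apply]
  simp only [vgen, XF, Matrix.of_apply]
  by_cases h0 : (i : ℕ) = 0
  · rw [Finset.sum_eq_zero]
    · simp [h0, ve_zero]
    · intro k _; rw [if_neg (by omega), zero_mul]
  · rw [Finset.sum_eq_single ⟨i - 1, by omega⟩]
    · simp only
      rw [if_pos (by omega), one_mul]
      by_cases h : i = j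
      · subst h; rw [if_pos (by omega), if_pos rfl]
      · rw [if_neg, if_neg h]; intro h'; apply h; ext; omega
    · intro b _ hb
      rw [if_neg, zero_mul]
      intro h'; apply hb; ext; simp only; omega
    · simp

theorem vgen_rel (hp : 2 ≤ p) (l : ℂ) (hl : l ^ (2 * p) = 1) ⦃x y : FreeAlgebra ℂ gen⦄
    (h : rel p x y) : FreeAlgebra.lift ℂ (vgen p l) x = FreeAlgebra.lift ℂ (vgen p l) y := by
  have hq := q_ne p
  have hl0 : l ≠ 0 := by rintro rfl; rw [zero_pow (by omega)] at hl; exact zero_ne_one hl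
  cases h with
  | KKinv =>
    simp only [map_mul, FreeAlgebra.lift_ι_apply, vgen, Matrix.diagonal_mul_diagonal, map_one]
    rw [← Matrix.diagonal_one]; congr 1; ext i
    have : q p ^ (2 * (i : ℕ)) ≠ 0 := pow_ne_zero _ hq
    field_simp
  | KinvK =>
    simp only [map_mul, FreeAlgebra.lift_ι_apply, vgen, Matrix.diagonal_mul_diagonal, map_one]
    rw [← Matrix.diagonal_one]; congr 1; ext i
    have : q p ^ (2 * (i : ℕ)) ≠ 0 := pow_ne_zero _ hq
    field_simp
  | Ep =>
    simp only [map_pow, FreeAlgebra.lift_ι_apply, map_zero]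
    apply strict_upper_pow
    intro i j h
    simp only [vgen, Matrix.of_apply]
    rw [if_neg (by omega)]
  | Fp =>
    simp only [map_pow, FreeAlgebra.lift_ι_apply, map_zero]
    apply strict_lower_pow
    intro i j h
    simp only [vgen, XF, Matrix.of_apply]
    rw [if_neg (by omega)]
  | K2p =>
    simp only [map_pow, FreeAlgebra.lift_ι_apply, vgen, Matrix.diagonal_pow, map_one]
    rw [← Matrix.diagonal_one]; congr 1; ext i
    simp only [Pi.pow_apply]
    rw [mul_pow, hl, inv_pow, ← pow_mul, mul_comm _ (2 * p), pow_mul, q_pow_two_p p hp]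
    simp
  | KE =>
    simp only [map_mul, map_smul, FreeAlgebra.lift_ι_apply, vgen]
    ext i j
    rw [Matrix.diagonal_mul, Matrix.smul_apply, Matrix.mul_diagonal, Matrix.of_apply]
    split_ifs with h
    · rw [← h, mul_add, pow_add, smul_eq_mul]
      have : q p ^ (2 * (i : ℕ)) ≠ 0 := pow_ne_zero _ hq
      field_simp
    · simp
  | KF =>
    simp only [map_mul, map_smul, FreeAlgebra.lift_ι_apply, vgen, XF]
    ext i j
    rw [Matrix.diagonal_mul, Matrix.smul_apply, Matrix.mul_diagonal, Matrix.of_apply]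
    split_ifs with h
    · rw [h, mul_add, pow_add, smul_eq_mul]
      have : q p ^ (2 * (j : ℕ)) ≠ 0 := pow_ne_zero _ hq
      field_simp
    · simp
  | EF =>
    simp only [map_mul, map_smul, map_sub, FreeAlgebra.lift_ι_apply]
    ext i j
    rw [Matrix.sub_apply, vgen_EF_apply p l i j hp, vgen_FE_apply]
    simp only [vgen, Matrix.smul_apply, Matrix.sub_apply, Matrix.diagonal_apply]
    split_ifs with h
    · rw [ve_succ p hp l hl0]; rfl
    · simp

/-- The (baby) Verma module of highest weight `l`. -/
def verma (hp : 2 ≤ p) (l : ℂ) (hl : l ^ (2 * p) = 1) : Uq p →ₐ[ℂ] Matrix (Fin p) (Fin p) ℂ :=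
  RingQuot.liftAlgHom ℂ ⟨FreeAlgebra.lift ℂ (vgen p l), vgen_rel p hp l hl⟩

variable (hp : 2 ≤ p) (l : ℂ) (hl : l ^ (2 * p) = 1)

theorem verma_E : verma p hp l hl (EE p) = vgen p l .E := by
  rw [verma, EE, RingQuot.liftAlgHom_mkAlgHom_apply, FreeAlgebra.lift_ι_apply]
theorem verma_F : verma p hp l hl (FF p) = vgen p l .F := by
  rw [verma, FF, RingQuot.liftAlgHom_mkAlgHom_apply, FreeAlgebra.lift_ι_apply]
theorem verma_K : verma p hp l hl (KK p) = vgen p l .K := by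
  rw [verma, KK, RingQuot.liftAlgHom_mkAlgHom_apply, FreeAlgebra.lift_ι_apply]
theorem verma_Kinv : verma p hp l hl (KKinv p) = vgen p l .Kinv := by
  rw [verma, KKinv, RingQuot.liftAlgHom_mkAlgHom_apply, FreeAlgebra.lift_ι_apply]

/-- Casimir on Verma -/
theorem verma_tt : verma p hp l hl (tt p) = (l * q p + (l * q p)⁻¹) • 1 := by
  have hq := q_ne p
  have hd := dd_ne p hp
  have hl0 : l ≠ 0 := by rintro rfl; rw [zero_pow (by omega)] at hl; exact zero_ne_one hl
  unfold tt
  simp only [map_add, map_smul, map_mul, verma_E, verma_F, verma_K, verma_Kinv]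
  ext i j
  simp only [Matrix.add_apply, Matrix.smul_apply, vgen_FE_apply]
  simp only [vgen, Matrix.diagonal_apply, Matrix.one_apply]
  split_ifs with h
  · have e3 := qi_mul_dd p hp ((i : ℕ) : ℤ)
    rw [← eq_div_iff hd] at e3
    unfold ve
    rw [e3, zpow_natCast, mul_comm 2 (i : ℕ), pow_mul]
    have hi : q p ^ (i : ℕ) ≠ 0 := pow_ne_zero _ hq
    generalize q p ^ (i : ℕ) = y at *
    simp only [smul_eq_mul]
    field_simp
    ring
  · simp

/-- Verma character -/
def zeta : Uq p →ₗ[ℂ] ℂ := chiOf p (verma p hp l hl)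

theorem zeta_tt (x : Uq p) :
    zeta p hp l hl (tt p * x) = (l * q p + (l * q p)⁻¹) * zeta p hp l hl x := by
  simp [zeta, chiOf, verma_tt]

theorem zeta_K (c : ℕ) : zeta p hp l hl (KK p ^ c) =
    l ^ c * ∑ i ∈ Finset.range p, ((q p ^ (2 * c))⁻¹) ^ i := by
  simp only [zeta, chiOf, LinearMap.comp_apply, AlgHom.toLinearMap_apply, map_pow, verma_K, vgen,
    Matrix.diagonal_pow, Matrix.traceLinearMap_apply, Matrix.trace_diagonal]
  rw [← Fin.sum_univ_eq_sum_range (fun i => ((q p ^ (2 * c))⁻¹) ^ i) p, Finset.mul_sum]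
  apply Finset.sum_congr rfl
  intro i _
  rw [Pi.pow_apply, mul_pow, inv_pow, inv_pow, ← pow_mul, ← pow_mul]
  congr 3; ring

theorem zeta_K' (c : ℕ) : (q p ^ (2 * c) - 1) * zeta p hp l hl (KK p ^ c) = 0 := by
  rw [zeta_K]
  have h := mul_geom_sum ((q p ^ (2 * c))⁻¹) p
  have hne : q p ^ (2 * c) ≠ 0 := pow_ne_zero _ (q_ne p)
  have h2 : ((q p ^ (2 * c))⁻¹) ^ p = 1 := by
    rw [inv_pow, ← pow_mul, show 2 * c * p = 2 * p * c by ring, pow_mul, q_pow_two_p p hp]; simp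
  rw [h2, sub_self] at h
  have h3 : q p ^ (2 * c) - 1 = - q p ^ (2 * c) * ((q p ^ (2 * c))⁻¹ - 1) := by
    field_simp; ring
  rw [h3]
  linear_combination (- q p ^ (2 * c) * l ^ c) * h

end verma

theorem sum_split {s r p : ℕ} (h : s + r = p) (f : Fin p → ℂ) :
    ∑ i, f i = (∑ i : Fin s, f ⟨i, by omega⟩) + ∑ j : Fin r, f ⟨s + j, by omega⟩ := by
  subst h
  rw [Fin.sum_univ_add]
  rfl

section decomp
variable (p : ℕ) (hp : 2 ≤ p)

theorem pm_inv {α : ℂ} (hα : α = 1 ∨ α = -1) : α⁻¹ = α := by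
  rcases hα with rfl | rfl <;> norm_num

theorem pm_sq {α : ℂ} (hα : α = 1 ∨ α = -1) : α * α = 1 := by
  rcases hα with rfl | rfl <;> norm_num

theorem ve_eq (hp : 2 ≤ p) {α : ℂ} (hα : α = 1 ∨ α = -1) (m : ℤ) (j : ℕ) :
    ve p (α * q p ^ (m - 1)) j = α * qi p (j : ℤ) * qi p (m - j) := by
  have hq := q_ne p
  have hd := dd_ne p hp
  have e3 := qi_mul_dd p hp (m - j)
  rw [← eq_div_iff hd] at e3
  unfold ve
  rw [e3, mul_inv, pm_inv hα, zpow_sub₀ hq, zpow_sub₀ hq, zpow_natCast, zpow_one]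
  have hi : q p ^ j ≠ 0 := pow_ne_zero _ hq
  have hm : q p ^ m ≠ 0 := zpow_ne_zero _ hq
  generalize q p ^ j = y at *
  generalize q p ^ m = z at *
  field_simp

theorem qi_neg (n : ℤ) : qi p (-n) = - qi p n := by
  unfold qi; rw [neg_neg, ← neg_div, neg_sub]

theorem qi_p_sub (hp : 2 ≤ p) (n : ℤ) : qi p (p - n) = qi p n := by
  have hq := q_ne p
  unfold qi
  rw [neg_sub, zpow_sub₀ hq, zpow_sub₀ hq, zpow_natCast, q_pow_p p hp, zpow_neg]
  congr 1
  have hm : q p ^ n ≠ 0 := zpow_ne_zero _ hq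
  field_simp; ring

theorem verma_decomp {α : ℂ} (hα : α = 1 ∨ α = -1) (s r : ℕ) (hsr : s + r = p) (hs : 1 ≤ s)
    (hl : (α * q p ^ ((s : ℤ) - 1)) ^ (2 * p) = 1)
    (ρ1 : Uq p →ₐ[ℂ] Matrix (Fin s) (Fin s) ℂ)
    (h1 : ρ1 (KK p) = XK p α s ∧ ρ1 (EE p) = XE p α s ∧ ρ1 (FF p) = XF s)
    (ρ2 : Uq p →ₐ[ℂ] Matrix (Fin r) (Fin r) ℂ)
    (h2 : 1 ≤ r → ρ2 (KK p) = XK p (-α) r ∧ ρ2 (EE p) = XE p (-α) r ∧ ρ2 (FF p) = XF r) :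
    zeta p hp _ hl = chiOf p ρ1 + chiOf p ρ2 := by
  have hq := q_ne p
  let e1 : Fin s → Fin p := fun i => ⟨i, by omega⟩
  let e2 : Fin r → Fin p := fun j => ⟨s + j, by omega⟩
  have key : ∀ x, (∀ i j, verma p hp _ hl x (e1 i) (e1 j) = ρ1 x i j) ∧
      (∀ i j, verma p hp _ hl x (e2 i) (e2 j) = ρ2 x i j) ∧
      (∀ i j, verma p hp _ hl x (e1 i) (e2 j) = 0) := by
    intro x
    induction x using Uq_ind p hp with
    | hE =>
      rw [verma_E]
      refine ⟨fun i j => ?_, fun i j => ?_, fun i j => ?_⟩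
      · rw [h1.2.1]
        simp only [vgen, XE, Matrix.of_apply, e1, ve_eq p hp hα]
      · rw [(h2 (by have := i.2; omega)).2.1]
        simp only [vgen, XE, Matrix.of_apply, e2]
        by_cases h : (i : ℕ) + 1 = j
        · rw [if_pos (by omega), if_pos h, ve_eq p hp hα]
          have a1 : (s : ℤ) - ((s + (j : ℕ) : ℕ) : ℤ) = -((j : ℕ) : ℤ) := by push_cast; ring
          have a2 : (r : ℤ) - ((j : ℕ) : ℤ) = p - ((s + (j : ℕ) : ℕ) : ℤ) := by
            rw [← hsr]; push_cast; ring
          rw [a1, a2, qi_neg, qi_p_sub p hp]; ring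
        · rw [if_neg (by omega), if_neg h]
      · simp only [vgen, Matrix.of_apply, e1, e2]
        by_cases h : (i : ℕ) + 1 = s + j
        · rw [if_pos h, ve_eq p hp hα]
          have a1 : (s : ℤ) - ((s + (j : ℕ) : ℕ) : ℤ) = 0 := by push_cast; omega
          rw [a1, qi_zero, mul_zero]
        · rw [if_neg h]
    | hF =>
      rw [verma_F]
      refine ⟨fun i j => ?_, fun i j => ?_, fun i j => ?_⟩
      · rw [h1.2.2]; rfl
      · rw [(h2 (by have := i.2; omega)).2.2]
        simp only [vgen, XF, Matrix.of_apply, e2]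
        congr 1
        simp only [eq_iff_iff]; omega
      · simp only [vgen, XF, Matrix.of_apply, e1, e2]
        rw [if_neg (by omega)]
    | hK =>
      rw [verma_K]
      refine ⟨fun i j => ?_, fun i j => ?_, fun i j => ?_⟩
      · rw [h1.1]
        simp only [vgen, XK, Matrix.diagonal_apply, e1, Fin.ext_iff]
        congr 1
        rw [mul_assoc, ← zpow_natCast, ← zpow_neg, ← zpow_add₀ hq]
        congr 2
      · rw [(h2 (by have := i.2; omega)).1]
        simp only [vgen, XK, Matrix.diagonal_apply, e2, Fin.ext_iff]
        by_cases h : (i : ℕ) = j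
        · rw [if_pos (by omega), if_pos h]
          have a1 : (r : ℤ) - 1 - 2 * (i : ℕ) = p + (s - 1 + -((2 * (s + (i : ℕ)) : ℕ) : ℤ)) := by
            rw [← hsr]; push_cast; ring
          rw [a1, zpow_add₀ hq, zpow_add₀ hq, zpow_neg, zpow_natCast, zpow_natCast, q_pow_p p hp]
          ring
        · rw [if_neg (by omega), if_neg h]
      · simp only [vgen, Matrix.diagonal_apply, e1, e2, Fin.mk.injEq]
        rw [if_neg (by omega)]
    | hc c =>
      simp only [AlgHom.commutes, Matrix.algebraMap_matrix_apply]
      refine ⟨fun i j => ?_, fun i j => ?_, fun i j => ?_⟩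
      · simp [e1, Fin.ext_iff]
      · simp [e2, Fin.ext_iff]
      · simp only [e1, e2, Fin.mk.injEq]; rw [if_neg (by omega)]
    | hadd x y hx hy =>
      simp only [map_add, Matrix.add_apply, hx.1, hx.2.1, hx.2.2, hy.1, hy.2.1, hy.2.2]
      simp
    | hmul x y hx hy =>
      refine ⟨fun i j => ?_, fun i j => ?_, fun i j => ?_⟩
      · rw [map_mul, map_mul, Matrix.mul_apply, Matrix.mul_apply, sum_split hsr]
        change (∑ k, verma p hp _ hl x (e1 i) (e1 k) * verma p hp _ hl y (e1 k) (e1 j)) +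
          (∑ k, verma p hp _ hl x (e1 i) (e2 k) * verma p hp _ hl y (e2 k) (e1 j)) = _
        simp only [hx.1, hx.2.2, hy.1]
        simp
      · rw [map_mul, map_mul, Matrix.mul_apply, Matrix.mul_apply, sum_split hsr]
        change (∑ k, verma p hp _ hl x (e2 i) (e1 k) * verma p hp _ hl y (e1 k) (e2 j)) +
          (∑ k, verma p hp _ hl x (e2 i) (e2 k) * verma p hp _ hl y (e2 k) (e2 j)) = _
        simp only [hx.2.1, hy.2.2, hy.2.1]
        simp
      · rw [map_mul, Matrix.mul_apply, sum_split hsr]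
        change (∑ k, verma p hp _ hl x (e1 i) (e1 k) * verma p hp _ hl y (e1 k) (e2 j)) +
          (∑ k, verma p hp _ hl x (e1 i) (e2 k) * verma p hp _ hl y (e2 k) (e2 j)) = _
        simp only [hx.2.2, hy.2.2]
        simp
  ext1 x
  have h3 := key x
  simp only [zeta, chiOf, LinearMap.add_apply, LinearMap.comp_apply, AlgHom.toLinearMap_apply,
    Matrix.traceLinearMap_apply, Matrix.trace, Matrix.diag_apply]
  rw [sum_split hsr]
  congr 1
  · exact Finset.sum_congr rfl fun i _ => h3.1 i i
  · exact Finset.sum_congr rfl fun i _ => h3.2.1 i i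

end decomp

theorem DR_Kinv (p : ℕ) (Δ : Uq p →ₐ[ℂ] (Uq p ⊗[ℂ] Uq p)) (hΔ : IsCoprod p Δ)
    {n : Type} [Fintype n] [DecidableEq n] (ρ : Uq p →ₐ[ℂ] Matrix n n ℂ) (i j : n) :
    DR p Δ ρ (KKinv p) i j = ρ (KKinv p) i j • KKinv p := by
  rw [DR, AlgHom.comp_apply, hΔ.2.2.2, Algebra.TensorProduct.lift_tmul,
    ← (cm_sc_comm p ρ _ _).eq, cm_sc_apply]

theorem slf_trace (p : ℕ) (φ : Uq p →ₗ[ℂ] ℂ) (hφ : IsSLF p φ) {n : Type} [Fintype n]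
    (A B : Matrix n n (Uq p)) : φ (A * B).trace = φ (B * A).trace := by
  simp only [Matrix.trace, Matrix.diag_apply, Matrix.mul_apply, map_sum]
  rw [Finset.sum_comm]
  refine Finset.sum_congr rfl fun i _ => Finset.sum_congr rfl fun j _ => hφ _ _

section pairs
variable (p : ℕ) (φ : Uq p →ₗ[ℂ] ℂ) {ι : Type} [Fintype ι] (κ co : ι → ℂ)

/-- auxiliary predicate -/
def Qp (y : Uq p × (ι → ℂ)) : Prop := ∀ a c : ℕ,
  φ (y.1 * EE p ^ a * KK p ^ c) = if a = 0 then ∑ j, co j * (y.2 j * κ j ^ c) else 0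

/-- auxiliary subalgebra: pairs in the Borel part -/
def Tp : Subalgebra ℂ (Uq p × (ι → ℂ)) where
  carrier := {y | ∀ x, Qp p φ κ co x → Qp p φ κ co (x * y)}
  mul_mem' := by
    intro a b ha hb x hx
    rw [← mul_assoc]; exact hb _ (ha _ hx)
  add_mem' := by
    intro a b ha hb x hx m c
    have h1 := ha x hx m c
    have h2 := hb x hx m c
    simp only [Prod.fst_mul, Prod.snd_mul, Pi.mul_apply, Prod.fst_add, Prod.snd_add, Pi.add_apply,
      mul_add, add_mul, map_add, Finset.sum_add_distrib] at h1 h2 ⊢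
    rw [h1, h2]
    split_ifs <;> simp
  algebraMap_mem' := by
    intro r x hx m c
    have h1 := hx m c
    rw [← Algebra.commutes, ← Algebra.smul_def]
    simp only [Prod.smul_fst, Prod.smul_snd, smul_mul_assoc, map_smul, Pi.smul_apply, h1]
    split_ifs
    · rw [smul_eq_mul, Finset.mul_sum]
      refine Finset.sum_congr rfl fun j _ => ?_
      simp only [smul_eq_mul]; ring
    · simp

theorem Tp_E : ((EE p, 0) : Uq p × (ι → ℂ)) ∈ Tp p φ κ co := by
  intro x hx a c
  have h1 := hx (a + 1) c
  simp only [Prod.fst_mul, Prod.snd_mul, Pi.mul_apply, Pi.zero_apply]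
  rw [mul_assoc x.1, ← pow_succ', h1]
  simp

theorem Tp_K : ((KK p, κ) : Uq p × (ι → ℂ)) ∈ Tp p φ κ co := by
  intro x hx a c
  have h1 := hx a (c + 1)
  simp only [Prod.fst_mul, Prod.snd_mul, Pi.mul_apply]
  rw [mul_assoc x.1, K_E_pow, mul_smul_comm, smul_mul_assoc, map_smul, ← mul_assoc, mul_assoc,
    ← pow_succ', h1]
  split_ifs with h
  · subst h
    simp only [mul_zero, pow_zero, one_smul]
    refine Finset.sum_congr rfl fun j _ => ?_
    ring
  · simp

theorem Tp_Kinv (hp : 2 ≤ p) (hκ : ∀ j, κ j ^ (2 * p) = 1) :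
    ((KKinv p, κ⁻¹) : Uq p × (ι → ℂ)) ∈ Tp p φ κ co := by
  have h := (Tp p φ κ co).pow_mem (Tp_K p φ κ co) (2 * p - 1)
  convert h using 1
  ext1
  · simp [Kinv_eq p hp]
  · ext j
    have h1 : κ j * κ j ^ (2 * p - 1) = 1 := by
      rw [← pow_succ', show 2 * p - 1 + 1 = 2 * p by omega, hκ]
    change (κ j)⁻¹ = κ j ^ (2 * p - 1)
    exact inv_eq_of_mul_eq_one_right h1

theorem Tp_eval (hp : 2 ≤ p) (hφ : IsSLF p φ) (hco : ∀ c : ℕ, φ (KK p ^ c) = ∑ j, co j * κ j ^ c)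
    (y : Uq p × (ι → ℂ)) (hy : y ∈ Tp p φ κ co) : φ y.1 = ∑ j, co j * y.2 j := by
  have h1 : Qp p φ κ co 1 := by
    intro a c
    by_cases ha : a = 0
    · subst ha; simp [hco]
    · rw [if_neg ha, Prod.fst_one, one_mul]
      by_cases hap : a < p
      · simpa using slf_weight p hp φ hφ 0 a c (by omega) hap (by omega)
      · rw [show a = p + (a - p) by omega, pow_add (EE p), E_pow]; simp
  have h2 := hy 1 h1 0 0
  simpa using h2

end pairs

section vtrace
variable (p : ℕ) (hp : 2 ≤ p) (D : Uq p →ₐ[ℂ] Matrix (Fin p) (Fin p) (Uq p)) (u : Uq p)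
  (a : Fin p → Uq p)

theorem DF_pow_zero (hF : ∀ i j : Fin p, D (FF p) i j = if i = j then a i else
      if (i : ℕ) = j + 1 then u else 0) (z : Fin p) (hz : (z : ℕ) = 0) (n : ℕ) (k : Fin p)
    (h : n < (k : ℕ)) : (D (FF p) ^ n) k z = 0 := by
  induction n generalizing k with
  | zero =>
    have : k ≠ z := by rintro rfl; omega
    simp [this]
  | succ n ih =>
    rw [pow_succ', Matrix.mul_apply]
    apply Finset.sum_eq_zero
    intro m _
    rw [hF]
    split_ifs with h1 h2
    · subst h1; rw [ih _ (by omega), mul_zero]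
    · rw [ih _ (by omega), mul_zero]
    · rw [zero_mul]

theorem DF_pow_diag (hF : ∀ i j : Fin p, D (FF p) i j = if i = j then a i else
      if (i : ℕ) = j + 1 then u else 0) (z : Fin p) (hz : (z : ℕ) = 0) (n : ℕ) (k : Fin p)
    (h : n = (k : ℕ)) : (D (FF p) ^ n) k z = u ^ n := by
  induction n generalizing k with
  | zero =>
    have : k = z := by ext; omega
    simp [this]
  | succ n ih =>
    rw [pow_succ', Matrix.mul_apply, Finset.sum_eq_single ⟨n, by omega⟩]
    · rw [ih _ rfl, hF, if_neg, if_pos, ← pow_succ']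
      · simp only; omega
      · intro h'; rw [Fin.ext_iff] at h'; simp only at h'; omega
    · intro m _ hm
      rw [hF]
      split_ifs with h1 h2
      · subst h1; rw [DF_pow_zero p D u a hF z hz _ _ (by omega), mul_zero]
      · exfalso; apply hm; ext; simp only; omega
      · rw [zero_mul]
    · simp

/-- the change of basis -/
def gm (z : Fin p) : Matrix (Fin p) (Fin p) (Uq p) := Matrix.of fun k i => (D (FF p) ^ (i : ℕ)) k z

theorem gm_unit (hu : IsUnit u) (hF : ∀ i j : Fin p, D (FF p) i j = if i = j then a i else
      if (i : ℕ) = j + 1 then u else 0) (z : Fin p) (hz : (z : ℕ) = 0) : IsUnit (gm p D z) := by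
  obtain ⟨v, rfl⟩ := hu
  set A : Matrix (Fin p) (Fin p) (Uq p) := Matrix.diagonal fun i => (v : Uq p) ^ (i : ℕ) with hA
  set B : Matrix (Fin p) (Fin p) (Uq p) :=
    Matrix.diagonal fun i => ((v⁻¹ : (Uq p)ˣ) : Uq p) ^ (i : ℕ) with hB
  have hAB : A * B = 1 := by
    rw [hA, hB, Matrix.diagonal_mul_diagonal, ← Matrix.diagonal_one]
    congr 1; ext i
    rw [← Units.val_pow_eq_pow_val, ← Units.val_pow_eq_pow_val, inv_pow, Units.mul_inv]
  have hBA : B * A = 1 := by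
    rw [hA, hB, Matrix.diagonal_mul_diagonal, ← Matrix.diagonal_one]
    congr 1; ext i
    rw [← Units.val_pow_eq_pow_val, ← Units.val_pow_eq_pow_val, inv_pow, Units.inv_mul]
  have hAu : IsUnit A := ⟨⟨A, B, hAB, hBA⟩, rfl⟩
  have hN : (B * gm p D z - 1) ^ p = 0 := by
    apply strict_upper_pow
    intro i j hij
    rw [Matrix.sub_apply, hB, Matrix.diagonal_mul, gm, Matrix.of_apply]
    by_cases h : i = j
    · subst h
      rw [DF_pow_diag p D _ a hF z hz _ _ rfl, Matrix.one_apply_eq,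
        ← Units.val_pow_eq_pow_val, ← Units.val_pow_eq_pow_val, inv_pow, Units.inv_mul, sub_self]
    · have : (j : ℕ) < i := by
        have : (i : ℕ) ≠ j := fun h' => h (Fin.ext h')
        omega
      rw [DF_pow_zero p D _ a hF z hz _ _ this, Matrix.one_apply_ne h, mul_zero, sub_zero]
  have h1 : IsUnit (1 + (B * gm p D z - 1)) := IsNilpotent.isUnit_one_add ⟨p, hN⟩
  have h2 : gm p D z = A * (1 + (B * gm p D z - 1)) := by
    rw [add_sub_cancel, ← mul_assoc, hAB, one_mul]
  rw [h2]
  exact hAu.mul h1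

variable (l cE : ℂ)

/-- conjugated matrix of `E` -/
def RE : Matrix (Fin p) (Fin p) (Uq p) := Matrix.of fun i j =>
  (if i = j then cE • EE p else 0) + if (i : ℕ) + 1 = j then
    (qi p (j : ℤ) * (dd p)⁻¹) • ((q p ^ (i : ℕ))⁻¹ • l • KK p - q p ^ (i : ℕ) • l⁻¹ • KKinv p) else 0

theorem gm_F (z : Fin p) : D (FF p) * gm p D z = gm p D z *
    Matrix.of fun i j : Fin p => if (i : ℕ) = (j : ℕ) + 1 then 1 else 0 := by
  ext k i
  rw [Matrix.mul_apply, Matrix.mul_apply]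
  simp only [gm, Matrix.of_apply]
  rw [sum_shift_F, ← Matrix.mul_apply, ← pow_succ']
  split_ifs with h
  · rfl
  · rw [show (i : ℕ) + 1 = p by omega, ← map_pow, F_pow]; simp

theorem gm_K (z : Fin p) (hK : ∀ i, D (KK p) i z = if i = z then l • KK p else 0) :
    D (KK p) * gm p D z = gm p D z *
      Matrix.diagonal fun i : Fin p => (l * (q p ^ (2 * (i : ℕ)))⁻¹) • KK p := by
  ext k i
  rw [Matrix.mul_apply, Matrix.mul_diagonal]
  simp only [gm, Matrix.of_apply]
  rw [← Matrix.mul_apply, ← map_pow, ← map_mul, K_F_pow, map_smul, map_mul, Matrix.smul_apply,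
    Matrix.mul_apply]
  simp only [hK, mul_ite, mul_zero, Finset.sum_ite_eq', Finset.mem_univ, if_true]
  rw [mul_smul_comm, mul_smul_comm, smul_smul, mul_comm l]

theorem gm_E (hp : 2 ≤ p) (z : Fin p) (hK : ∀ i, D (KK p) i z = if i = z then l • KK p else 0)
    (hKi : ∀ i, D (KKinv p) i z = if i = z then l⁻¹ • KKinv p else 0)
    (hE : ∀ i, D (EE p) i z = if i = z then cE • EE p else 0) :
    D (EE p) * gm p D z = gm p D z * RE p l cE := by
  ext k i
  rw [Matrix.mul_apply, Matrix.mul_apply]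
  simp only [gm, RE, Matrix.of_apply, mul_add, Finset.sum_add_distrib]
  rw [← Matrix.mul_apply]
  simp only [mul_ite, mul_zero, Finset.sum_ite_eq', Finset.mem_univ, if_true]
  have hA : ∀ n : ℕ, (D (FF p ^ n) * D (EE p)) k z = (D (FF p) ^ n) k z * (cE • EE p) := by
    intro n
    rw [Matrix.mul_apply]
    simp only [hE, mul_ite, mul_zero, Finset.sum_ite_eq', Finset.mem_univ, if_true, map_pow]
  rw [← map_pow, ← map_mul]
  by_cases h0 : (i : ℕ) = 0
  · rw [Finset.sum_eq_zero, add_zero, h0, pow_zero, mul_one]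
    · have := hA 0
      simpa using this
    · intro m _; rw [if_neg (by omega)]
  · obtain ⟨n, hn⟩ : ∃ n, (i : ℕ) = n + 1 := ⟨i - 1, by omega⟩
    rw [Finset.sum_eq_single ⟨n, by omega⟩]
    · rw [if_pos hn.symm, hn, E_F_pow p hp, map_add, map_mul, Matrix.add_apply, hA]
      refine congrArg₂ (· + ·) (by rw [map_pow]) ?_
      rw [map_smul, map_mul, map_sub, map_smul, map_smul, Matrix.smul_apply, Matrix.mul_apply]
      simp only [Matrix.sub_apply, Matrix.smul_apply, hK, hKi]
      rw [Finset.sum_eq_single z]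
      · simp only [if_true, map_pow, mul_smul_comm]
        push_cast
        rfl
      · intro b _ hb; simp [hb]
      · simp
    · intro b _ hb
      rw [if_neg]
      intro h; apply hb; ext; simp only; omega
    · simp

theorem verma_trace {ι : Type} [Fintype ι] (κ co : ι → ℂ) (φ : Uq p →ₗ[ℂ] ℂ) (hφ : IsSLF p φ)
    (hco : ∀ c : ℕ, φ (KK p ^ c) = ∑ j, co j * κ j ^ c)
    (hlκ : ∀ j, (l * κ j) ^ (2 * p) = 1) (hκ : ∀ j, κ j ^ (2 * p) = 1)
    (hu : IsUnit u) (hF : ∀ i j : Fin p, D (FF p) i j = if i = j then a i else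
      if (i : ℕ) = j + 1 then u else 0) (z : Fin p) (hz : (z : ℕ) = 0)
    (hK : ∀ i, D (KK p) i z = if i = z then l • KK p else 0)
    (hKi : ∀ i, D (KKinv p) i z = if i = z then l⁻¹ • KKinv p else 0)
    (hE : ∀ i, D (EE p) i z = if i = z then cE • EE p else 0) (x : Uq p) :
    φ (D x).trace = ∑ j, co j * zeta p hp (l * κ j) (hlκ j) x := by
  obtain ⟨g, hg⟩ := gm_unit p D u a hu hF z hz
  set h : Matrix (Fin p) (Fin p) (Uq p) := Units.val g⁻¹ with hh
  have gh : gm p D z * h = 1 := by rw [← hg, hh]; exact Units.mul_inv g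
  have hgg : h * gm p D z = 1 := by rw [← hg, hh]; exact Units.inv_mul g
  have conj : ∀ y M, D y * gm p D z = gm p D z * M → h * (D y * gm p D z) = M := by
    intro y M hM
    rw [hM, ← mul_assoc, hgg, one_mul]
  let pr : Uq p → Fin p → Fin p → Uq p × (ι → ℂ) := fun y i k =>
    ((h * (D y * gm p D z)) i k, fun j => verma p hp (l * κ j) (hlκ j) y i k)
  have key : ∀ y, ∀ i k, pr y i k ∈ Tp p φ κ co := by
    intro y
    induction y using Uq_ind p hp with
    | hE =>
      intro i k
      have e : pr (EE p) i k = (if i = k then cE • ((EE p, 0) : Uq p × (ι → ℂ)) else 0) +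
          if (i : ℕ) + 1 = k then (qi p (k : ℤ) * (dd p)⁻¹) • ((q p ^ (i : ℕ))⁻¹ • l •
            ((KK p, κ) : Uq p × (ι → ℂ)) - q p ^ (i : ℕ) • l⁻¹ •
            ((KKinv p, κ⁻¹) : Uq p × (ι → ℂ))) else 0 := by
        simp only [pr]
        rw [conj _ _ (gm_E p D l cE hp z hK hKi hE)]
        ext1
        · simp only [RE, Matrix.of_apply, Prod.fst_add]
          congr 1
          · split_ifs <;> simp
          · split_ifs <;> simp
        · ext j
          simp only [verma_E, vgen, Matrix.of_apply, Prod.snd_add, Pi.add_apply]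
          have e1 : (if i = k then cE • ((EE p, 0) : Uq p × (ι → ℂ)) else 0).2 j = 0 := by
            split_ifs <;> simp
          rw [e1, zero_add]
          split_ifs with h
          · simp only [ve, Prod.smul_snd, Prod.snd_sub, Pi.smul_apply, Pi.sub_apply, smul_eq_mul,
              Pi.inv_apply]
            rw [← h, pow_succ, mul_inv, mul_inv]
            have := q_ne p
            have h2 : q p ^ (i : ℕ) ≠ 0 := pow_ne_zero _ this
            field_simp
          · simp
      rw [e]
      refine add_mem ?_ ?_
      · split_ifs
        · exact Subalgebra.smul_mem _ (Tp_E p φ κ co) _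
        · exact zero_mem _
      · split_ifs
        · exact Subalgebra.smul_mem _ (sub_mem (Subalgebra.smul_mem _ (Subalgebra.smul_mem _
            (Tp_K p φ κ co) _) _) (Subalgebra.smul_mem _ (Subalgebra.smul_mem _
            (Tp_Kinv p φ κ co hp hκ) _) _)) _
        · exact zero_mem _
    | hF =>
      intro i k
      have e : pr (FF p) i k = if (i : ℕ) = (k : ℕ) + 1 then 1 else 0 := by
        simp only [pr]
        rw [conj _ _ (gm_F p D z)]
        ext1
        · simp only [Matrix.of_apply]; split_ifs <;> simp
        · ext j
          simp only [verma_F, vgen, XF, Matrix.of_apply]; split_ifs <;> simp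
      rw [e]
      split_ifs
      · exact one_mem _
      · exact zero_mem _
    | hK =>
      intro i k
      have e : pr (KK p) i k = if i = k then (l * (q p ^ (2 * (i : ℕ)))⁻¹) •
          ((KK p, κ) : Uq p × (ι → ℂ)) else 0 := by
        simp only [pr]
        rw [conj _ _ (gm_K p D l z hK)]
        ext1
        · simp only [Matrix.diagonal_apply]; split_ifs <;> simp
        · ext j
          simp only [verma_K, vgen, Matrix.diagonal_apply]; split_ifs <;> simp
          ring
      rw [e]
      split_ifs
      · exact Subalgebra.smul_mem _ (Tp_K p φ κ co) _
      · exact zero_mem _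
    | hc c =>
      intro i k
      have e : pr (algebraMap ℂ _ c) i k = if i = k then algebraMap ℂ _ c else 0 := by
        simp only [pr, AlgHom.commutes]
        rw [Algebra.commutes, ← mul_assoc, hgg, one_mul]
        simp only [Matrix.algebraMap_matrix_apply]
        split_ifs <;> rfl
      rw [e]
      split_ifs
      · exact Subalgebra.algebraMap_mem _ _
      · exact zero_mem _
    | hadd x y hx hy =>
      intro i k
      have e : pr (x + y) i k = pr x i k + pr y i k := by
        simp only [pr, map_add, add_mul, mul_add, Matrix.add_apply]
        rfl
      rw [e]; exact add_mem (hx i k) (hy i k)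
    | hmul x y hx hy =>
      intro i k
      have e : pr (x * y) i k = ∑ m, pr x i m * pr y m k := by
        ext1
        · rw [Prod.fst_sum]
          simp only [pr, Prod.fst_mul]
          rw [← Matrix.mul_apply, map_mul]
          refine congrFun (congrFun ?_ i) k
          calc h * (D x * D y * gm p D z) = h * D x * (gm p D z * h) * D y * gm p D z := by
                rw [gh]; simp only [mul_assoc, one_mul]
            _ = _ := by simp only [mul_assoc]
        · rw [Prod.snd_sum]
          ext j
          simp only [pr, map_mul, Matrix.mul_apply, Prod.snd_mul, Finset.sum_apply, Pi.mul_apply]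
      rw [e]; exact sum_mem fun m _ => mul_mem (hx i m) (hy m k)
  have e1 : (D x) = gm p D z * (h * D x) := by rw [← mul_assoc, gh, one_mul]
  rw [e1, slf_trace p φ hφ, mul_assoc]
  simp only [Matrix.trace, Matrix.diag_apply, map_sum]
  have e2 : ∀ i, φ ((h * (D x * gm p D z)) i i) =
      ∑ j, co j * verma p hp (l * κ j) (hlκ j) x i i :=
    fun i => Tp_eval p φ κ co hp hφ hco (pr x i i) (key x i i)
  simp only [e2]
  rw [Finset.sum_comm]
  refine Finset.sum_congr rfl fun j _ => ?_
  simp [zeta, chiOf, Matrix.trace, Finset.mul_sum]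

end vtrace

section convzeta
variable (p : ℕ) (hp : 2 ≤ p) (Δ : Uq p →ₐ[ℂ] (Uq p ⊗[ℂ] Uq p)) (hΔ : IsCoprod p Δ)
  (l : ℂ) (hl : l ^ (2 * p) = 1) {ι : Type} [Fintype ι] (κ co : ι → ℂ)
  (φ : Uq p →ₗ[ℂ] ℂ) (hφ : IsSLF p φ)
  (hco : ∀ c : ℕ, φ (KK p ^ c) = ∑ j, co j * κ j ^ c)
  (hlκ : ∀ j, (l * κ j) ^ (2 * p) = 1) (hκ : ∀ j, κ j ^ (2 * p) = 1)

theorem Kinv_unit : IsUnit (KKinv p) := ⟨⟨KKinv p, KK p, Kinv_K p, K_Kinv p⟩, rfl⟩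

theorem conv_zeta_right (hΔ : IsCoprod p Δ) (hφ : IsSLF p φ)
    (hco : ∀ c : ℕ, φ (KK p ^ c) = ∑ j, co j * κ j ^ c)
    (hκ : ∀ j, κ j ^ (2 * p) = 1) (x : Uq p) :
    conv p Δ φ (zeta p hp l hl) x = ∑ j, co j * zeta p hp (l * κ j) (hlκ j) x := by
  unfold zeta
  rw [conv_DR]
  refine verma_trace p hp (DR p Δ (verma p hp l hl)) (KKinv p) (fun _ => FF p) l l κ co φ hφ hco
    hlκ hκ (Kinv_unit p) ?_ ⟨0, by omega⟩ rfl ?_ ?_ ?_ x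
  · intro i j
    rw [DR_F p Δ _ hΔ, verma_F]
    simp only [vgen, XF, Matrix.of_apply, Matrix.one_apply]
    by_cases h : i = j
    · subst h; simp
    · simp only [h, if_false, zero_smul, zero_add]
      split_ifs <;> simp
  · intro i
    rw [DR_K p Δ _ hΔ, verma_K]
    simp only [vgen, Matrix.diagonal_apply]
    split_ifs with h
    · subst h; simp
    · simp
  · intro i
    rw [DR_Kinv p Δ hΔ, verma_Kinv]
    simp only [vgen, Matrix.diagonal_apply]
    split_ifs with h
    · subst h; simp
    · simp
  · intro i
    rw [DR_E p Δ _ hΔ, verma_K, verma_E]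
    simp only [vgen, Matrix.diagonal_apply, Matrix.of_apply]
    rw [if_neg (by simp)]
    split_ifs with h
    · subst h; simp
    · simp

theorem conv_zeta_left (hΔ : IsCoprod p Δ) (hφ : IsSLF p φ)
    (hco : ∀ c : ℕ, φ (KK p ^ c) = ∑ j, co j * κ j ^ c)
    (hκ : ∀ j, κ j ^ (2 * p) = 1) (x : Uq p) :
    conv p Δ (zeta p hp l hl) φ x = ∑ j, co j * zeta p hp (l * κ j) (hlκ j) x := by
  unfold zeta
  rw [conv_DL]
  refine verma_trace p hp (DL p Δ (verma p hp l hl)) 1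
    (fun i => (l⁻¹ * q p ^ (2 * (i : ℕ))) • FF p) l 1 κ co φ hφ hco
    hlκ hκ isUnit_one ?_ ⟨0, by omega⟩ rfl ?_ ?_ ?_ x
  · intro i j
    rw [DL_F p Δ _ hΔ, verma_F, verma_Kinv]
    simp only [vgen, XF, Matrix.of_apply, Matrix.diagonal_apply]
    by_cases h : i = j
    · subst h; simp
    · simp only [h, if_false, zero_smul, add_zero]
      split_ifs <;> simp
  · intro i
    rw [DL_K p Δ _ hΔ, verma_K]
    simp only [vgen, Matrix.diagonal_apply]
    split_ifs with h
    · subst h; simp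
    · simp
  · intro i
    rw [DL_Kinv p Δ _ hΔ, verma_Kinv]
    simp only [vgen, Matrix.diagonal_apply]
    split_ifs with h
    · subst h; simp
    · simp
  · intro i
    rw [DL_E p Δ _ hΔ, verma_E]
    simp only [vgen, Matrix.one_apply, Matrix.of_apply]
    rw [if_neg (show ¬ ((i : ℕ) + 1 = 0) by omega)]
    split_ifs with h
    · simp
    · simp

/-- forms vanishing on the Cartan part are annihilated by Verma characters -/
theorem conv_zeta_zero (hΔ : IsCoprod p Δ) (hφ : IsSLF p φ) (h0 : ∀ c : ℕ, φ (KK p ^ c) = 0) :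
    conv p Δ (zeta p hp l hl) φ = 0 := by
  ext x
  rw [conv_zeta_left p hp Δ l hl (ι := Fin 0) (fun _ => 1) (fun _ => 0) φ (fun j => j.elim0) hΔ hφ
    (by simpa using h0) (fun j => j.elim0)]
  simp

theorem q_zpow_pow (hp : 2 ≤ p) (m : ℤ) : (q p ^ m) ^ (2 * p) = 1 := by
  rw [← zpow_natCast, ← zpow_mul, mul_comm, zpow_mul, zpow_natCast, q_pow_two_p p hp, one_zpow]

theorem pm_pow {α : ℂ} (hα : α = 1 ∨ α = -1) : α ^ (2 * p) = 1 := by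
  rcases hα with rfl | rfl
  · simp
  · rw [pow_mul]; simp

theorem aq_pow (hp : 2 ≤ p) {α : ℂ} (hα : α = 1 ∨ α = -1) (m : ℤ) :
    (α * q p ^ m) ^ (2 * p) = 1 := by
  rw [mul_pow, q_zpow_pow p hp, pm_pow p hα, one_mul]

variable (ρX : (α : ℂ) → (s : ℕ) → (Uq p →ₐ[ℂ] Matrix (Fin s) (Fin s) ℂ))

theorem zeta_eq (hX : IsXRep p ρX) {α : ℂ} (hα : α = 1 ∨ α = -1) (s : ℕ) (hs : 1 ≤ s)
    (hsp : s ≤ p) : zeta p hp (α * q p ^ ((s : ℤ) - 1)) (aq_pow p hp hα _) =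
      chiOf p (ρX α s) + chiOf p (ρX (-α) (p - s)) := by
  have hα' : -α = 1 ∨ -α = -1 := by rcases hα with rfl | rfl <;> simp
  exact verma_decomp p hp hα s (p - s) (by omega) hs _ _ (hX α hα s hs hsp) _
    (fun h => hX (-α) hα' (p - s) h (by omega))

theorem chi_zero (r : ℕ) (hr : r = 0) (ρ : Uq p →ₐ[ℂ] Matrix (Fin r) (Fin r) ℂ) :
    chiOf p ρ = 0 := by
  subst hr
  ext x
  simp [chiOf, Matrix.trace]

theorem chi_congr (α : ℂ) {s s2 : ℕ} (h : s = s2) : chiOf p (ρX α s) = chiOf p (ρX α s2) := by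
  subst h; rfl

theorem zeta_mem (hX : IsXRep p ρX) : zeta p hp l hl ∈ Vsub p ρX := by
  have : NeZero (2 * p) := ⟨by omega⟩
  obtain ⟨m, hm, rfl⟩ := (q_prim p hp).eq_pow_of_pow_eq_one hl
  have gen : ∀ α : ℂ, (α = 1 ∨ α = -1) → ∀ s : ℕ, 1 ≤ s → s ≤ p →
      q p ^ m = α * q p ^ ((s : ℤ) - 1) → zeta p hp (q p ^ m) hl ∈ Vsub p ρX := by
    intro α hα s h1 h2 e
    have e2 : zeta p hp (q p ^ m) hl = chiOf p (ρX α s) + chiOf p (ρX (-α) (p - s)) := by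
      rw [← zeta_eq p hp ρX hX hα s h1 h2]
      congr 1
    rw [e2]
    rcases Nat.lt_or_ge s p with h3 | h3
    · apply Submodule.subset_span
      left
      rcases hα with rfl | rfl
      · refine ⟨⟨s - 1, by omega⟩, ?_⟩
        exact congrArg₂ (· + ·) (chi_congr p ρX _ (by simp only; omega))
          (chi_congr p ρX _ (by simp only; omega))
      · refine ⟨⟨p - s - 1, by omega⟩, ?_⟩
        rw [neg_neg, add_comm]
        exact congrArg₂ (· + ·) (chi_congr p ρX _ (by simp only; omega))
          (chi_congr p ρX _ (by simp only; omega))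
    · obtain rfl : s = p := by omega
      rw [chi_zero s (s - s) (by omega), add_zero]
      apply Submodule.subset_span
      right
      rcases hα with rfl | rfl <;> simp
  rcases Nat.lt_or_ge m p with h | h
  · refine gen 1 (Or.inl rfl) (m + 1) (by omega) (by omega) ?_
    push_cast
    rw [add_sub_cancel_right, zpow_natCast, one_mul]
  · refine gen (-1) (Or.inr rfl) (m - p + 1) (by omega) (by omega) ?_
    push_cast
    rw [add_sub_cancel_right, zpow_natCast, ← q_pow_p p hp, ← pow_add]
    congr 1; omega

/-- Fourier inversion -/
theorem fourier (hp : 2 ≤ p) (f : ℕ → ℂ) (hf : ∀ c, f (c + 2 * p) = f c) : ∃ co : Fin (2 * p) → ℂ,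
    ∀ c : ℕ, f c = ∑ j, co j * (q p ^ (j : ℕ)) ^ c := by
  have hq := q_ne p
  have hpp : (2 * p : ℂ) ≠ 0 := by
    have : (p : ℂ) ≠ 0 := by exact_mod_cast (by omega : p ≠ 0)
    simpa using this
  refine ⟨fun j => (2 * p : ℂ)⁻¹ * ∑ c : Fin (2 * p), f c * ((q p ^ (j : ℕ))⁻¹) ^ (c : ℕ), ?_⟩
  have hper : ∀ c, f c = f (c % (2 * p)) := by
    intro c
    have : ∀ k r, f (r + 2 * p * k) = f r := by
      intro k r
      induction k with
      | zero => simp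
      | succ k ih => rw [mul_add, mul_one, ← add_assoc, hf, ih]
    conv_lhs => rw [← Nat.mod_add_div c (2 * p)]
    exact this _ _
  intro c
  rw [hper c]
  have hc : c % (2 * p) < 2 * p := Nat.mod_lt _ (by omega)
  have hqc : ∀ j : ℕ, (q p ^ j) ^ c = (q p ^ j) ^ (c % (2 * p)) := by
    intro j
    conv_lhs => rw [← Nat.mod_add_div c (2 * p)]
    have h1 : (q p ^ j) ^ (2 * p) = 1 := by
      rw [← pow_mul, mul_comm, pow_mul, q_pow_two_p p hp, one_pow]
    rw [pow_add, pow_mul, h1, one_pow, mul_one]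
  simp only [hqc]
  generalize c % (2 * p) = d at hc
  have orth : ∀ e : Fin (2 * p), ∑ j : Fin (2 * p), ((q p ^ (j : ℕ))⁻¹) ^ (e : ℕ) * (q p ^ (j : ℕ)) ^ d
      = if (e : ℕ) = d then (2 * p : ℂ) else 0 := by
    intro e
    split_ifs with h
    · rw [h]
      have : ∀ j : Fin (2 * p), ((q p ^ (j : ℕ))⁻¹) ^ d * (q p ^ (j : ℕ)) ^ d = 1 := by
        intro j
        rw [← mul_pow, inv_mul_cancel₀ (pow_ne_zero _ hq), one_pow]
      simp only [this, Finset.sum_const, Finset.card_univ, Fintype.card_fin]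
      simp
    · have e1 : ∀ j : Fin (2 * p), ((q p ^ (j : ℕ))⁻¹) ^ (e : ℕ) * (q p ^ (j : ℕ)) ^ d =
          (q p ^ ((d : ℤ) - e)) ^ (j : ℕ) := by
        intro j
        rw [zpow_sub₀ hq, zpow_natCast, zpow_natCast, div_pow, inv_pow, ← pow_mul, ← pow_mul,
          ← pow_mul, ← pow_mul, mul_comm d, mul_comm (e : ℕ), div_eq_mul_inv, mul_comm]
      simp only [e1]
      rw [Fin.sum_univ_eq_sum_range (fun j => (q p ^ ((d : ℤ) - e)) ^ j) (2 * p)]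
      have h1 := mul_geom_sum (q p ^ ((d : ℤ) - e)) (2 * p)
      rw [q_zpow_pow p hp, sub_self] at h1
      rcases mul_eq_zero.mp h1 with h2 | h2
      · exfalso
        have h3 : q p ^ ((d : ℤ) - e) = 1 := by linear_combination h2
        rw [(q_prim p hp).zpow_eq_one_iff_dvd] at h3
        obtain ⟨k, hk⟩ := h3
        have he := e.2
        have hk0 : k = 0 := by
          by_contra hk0
          rcases lt_or_gt_of_ne hk0 with h4 | h4
          · have : ((2 * p : ℕ) : ℤ) * k ≤ - ((2 * p : ℕ) : ℤ) := by nlinarith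
            omega
          · have : ((2 * p : ℕ) : ℤ) * k ≥ ((2 * p : ℕ) : ℤ) := by nlinarith
            omega
        subst hk0
        omega
      · exact h2
  simp only [Finset.mul_sum, Finset.sum_mul]
  rw [Finset.sum_comm]
  have e2 : ∀ e : Fin (2 * p), ∑ j : Fin (2 * p), (2 * p : ℂ)⁻¹ * (f e * ((q p ^ (j : ℕ))⁻¹) ^ (e : ℕ)) *
      (q p ^ (j : ℕ)) ^ d = if e = ⟨d, hc⟩ then f d else 0 := by
    intro e
    have : ∀ j : Fin (2 * p), (2 * p : ℂ)⁻¹ * (f e * ((q p ^ (j : ℕ))⁻¹) ^ (e : ℕ)) *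
      (q p ^ (j : ℕ)) ^ d = ((2 * p : ℂ)⁻¹ * f e) * (((q p ^ (j : ℕ))⁻¹) ^ (e : ℕ) * (q p ^ (j : ℕ)) ^ d) := by
      intro j; ring
    simp only [this]
    rw [← Finset.mul_sum, orth]
    by_cases h : (e : ℕ) = d
    · rw [if_pos h, if_pos (Fin.ext h), h, mul_comm, ← mul_assoc, mul_inv_cancel₀ hpp, one_mul]
    · rw [if_neg h, if_neg (fun h' => h (by rw [h']))]; simp
  simp only [e2]
  simp

theorem conv_zeta_mem (hΔ : IsCoprod p Δ) (hX : IsXRep p ρX) (hφ : IsSLF p φ) :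
    conv p Δ φ (zeta p hp l hl) ∈ Vsub p ρX := by
  obtain ⟨co, hco⟩ := fourier p hp (fun c => φ (KK p ^ c)) (by
    intro c; rw [pow_add, K_pow, mul_one])
  have hk : ∀ j : Fin (2 * p), (q p ^ (j : ℕ)) ^ (2 * p) = 1 := by
    intro j; rw [← pow_mul, mul_comm, pow_mul, q_pow_two_p p hp, one_pow]
  have hlk : ∀ j : Fin (2 * p), (l * q p ^ (j : ℕ)) ^ (2 * p) = 1 := by
    intro j; rw [mul_pow, hl, hk, one_mul]
  have : conv p Δ φ (zeta p hp l hl) = ∑ j, co j • zeta p hp (l * q p ^ (j : ℕ)) (hlk j) := by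
    ext x
    rw [conv_zeta_right p hp Δ l hl (fun j : Fin (2 * p) => q p ^ (j : ℕ)) co φ hlk hΔ hφ hco hk]
    simp [LinearMap.sum_apply]
  rw [this]
  exact sum_mem fun j _ => Submodule.smul_mem _ _ (zeta_mem p hp _ _ ρX hX)

theorem V_ideal (hp : 2 ≤ p) (hΔ : IsCoprod p Δ) (hX : IsXRep p ρX) (hφ : IsSLF p φ)
    (v : Uq p →ₗ[ℂ] ℂ) (hv : v ∈ Vsub p ρX) : conv p Δ φ v ∈ Vsub p ρX := by
  induction hv using Submodule.span_induction with
  | zero => rw [conv_zero_right]; exact zero_mem _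
  | add a b _ _ ha hb => rw [conv_add_right]; exact add_mem ha hb
  | smul c a _ ha => rw [conv_smul_right]; exact Submodule.smul_mem _ _ ha
  | mem v hv =>
    rcases hv with ⟨s, rfl⟩ | hv
    · simp only
      rw [← zeta_eq p hp ρX hX (Or.inl rfl) _ (by omega) (by omega)]
      exact conv_zeta_mem p hp Δ _ _ φ ρX hΔ hX hφ
    · have hz : ∀ α : ℂ, (α = 1 ∨ α = -1) → conv p Δ φ (chiOf p (ρX α p)) ∈ Vsub p ρX := by
        intro α hα
        have e := zeta_eq p hp ρX hX hα p (by omega) le_rfl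
        rw [chi_zero p (p - p) (by omega), add_zero] at e
        rw [← e]
        exact conv_zeta_mem p hp Δ _ _ φ ρX hΔ hX hφ
      rcases hv with rfl | rfl
      · exact hz 1 (Or.inl rfl)
      · exact hz (-1) (Or.inr rfl)

end convzeta

/-- generic index set -/
abbrev Gi (s r : ℕ) := Fin s ⊕ (Fin r ⊕ (Fin r ⊕ Fin s))

/-- generic `K` diagonal -/
def GKd (p : ℕ) (α : ℂ) (s r : ℕ) : Gi s r → ℂ
  | .inl i => α * q p ^ ((s : ℤ) - 1 - 2 * (i : ℕ))
  | .inr (.inl j) => -α * q p ^ ((p : ℤ) - s - 1 - 2 * (j : ℕ))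
  | .inr (.inr (.inl k)) => -α * q p ^ ((p : ℤ) - s - 1 - 2 * (k : ℕ))
  | .inr (.inr (.inr l)) => α * q p ^ ((s : ℤ) - 1 - 2 * (l : ℕ))

/-- generic `E` -/
def GE (p : ℕ) (α : ℂ) (s r : ℕ) : Matrix (Gi s r) (Gi s r) ℂ :=
  Matrix.of fun i j =>
    match i, j with
    | .inl i, .inl j =>
        if (i : ℕ) + 1 = (j : ℕ) then α * qi p (j : ℕ) * qi p ((s : ℤ) - (j : ℕ)) else 0
    | .inr (.inl jx), .inl j => if (j : ℕ) = 0 ∧ (jx : ℕ) + 1 = r then 1 else 0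
    | .inr (.inr (.inr l)), .inl j => if (l : ℕ) + 1 = (j : ℕ) then 1 else 0
    | .inr (.inl i), .inr (.inl j) =>
        if (i : ℕ) + 1 = (j : ℕ) then -α * qi p (j : ℕ) * qi p ((p : ℤ) - s - (j : ℕ)) else 0
    | .inr (.inr (.inl i)), .inr (.inr (.inl k)) =>
        if (i : ℕ) + 1 = (k : ℕ) then -α * qi p (k : ℕ) * qi p ((p : ℤ) - s - (k : ℕ)) else 0
    | .inr (.inr (.inr l)), .inr (.inr (.inl k)) =>
        if (k : ℕ) = 0 ∧ (l : ℕ) + 1 = s then 1 else 0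
    | .inr (.inr (.inr i)), .inr (.inr (.inr l)) =>
        if (i : ℕ) + 1 = (l : ℕ) then α * qi p (l : ℕ) * qi p ((s : ℤ) - (l : ℕ)) else 0
    | _, _ => 0

/-- generic `F` -/
def GF (s r : ℕ) : Matrix (Gi s r) (Gi s r) ℂ :=
  Matrix.of fun i j =>
    match i, j with
    | .inl i, .inl j => if (i : ℕ) = (j : ℕ) + 1 then (1 : ℂ) else 0
    | .inr (.inr (.inl k)), .inl j => if (j : ℕ) + 1 = s ∧ (k : ℕ) = 0 then 1 else 0
    | .inr (.inl i), .inr (.inl j) => if (i : ℕ) = (j : ℕ) + 1 then 1 else 0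
    | .inr (.inr (.inr l)), .inr (.inl j) => if (j : ℕ) + 1 = r ∧ (l : ℕ) = 0 then 1 else 0
    | .inr (.inr (.inl i)), .inr (.inr (.inl k)) => if (i : ℕ) = (k : ℕ) + 1 then 1 else 0
    | .inr (.inr (.inr i)), .inr (.inr (.inr l)) => if (i : ℕ) = (l : ℕ) + 1 then 1 else 0
    | _, _ => 0

theorem PK_eq (p : ℕ) (α : ℂ) (s : ℕ) : PK p α s = Matrix.diagonal (GKd p α s (p - s)) := by
  unfold PK; congr 1; ext i; rcases i with i | i | i | i <;> rfl

theorem PE_eq (p : ℕ) (α : ℂ) (s : ℕ) : PE p α s = GE p α s (p - s) := by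
  ext i j; rcases i with i | i | i | i <;> rcases j with j | j | j | j <;> rfl

theorem PF_eq (p : ℕ) (s : ℕ) : PF p s = GF s (p - s) := by
  ext i j; rcases i with i | i | i | i <;> rcases j with j | j | j | j <;> rfl

/-- zero blocks -/
structure Zer {m n : Type} (A : Matrix (m ⊕ (n ⊕ (n ⊕ m))) (m ⊕ (n ⊕ (n ⊕ m))) ℂ) : Prop where
  bx : ∀ i j, A (.inl i) (.inr (.inl j)) = 0
  by' : ∀ i j, A (.inl i) (.inr (.inr (.inl j))) = 0
  ba : ∀ i j, A (.inl i) (.inr (.inr (.inr j))) = 0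
  xy : ∀ i j, A (.inr (.inl i)) (.inr (.inr (.inl j))) = 0
  xa : ∀ i j, A (.inr (.inl i)) (.inr (.inr (.inr j))) = 0
  yx : ∀ i j, A (.inr (.inr (.inl i))) (.inr (.inl j)) = 0
  ya : ∀ i j, A (.inr (.inr (.inl i))) (.inr (.inr (.inr j))) = 0

/-- compatible blocks -/
structure Cmp {m n : Type} (A : Matrix (m ⊕ (n ⊕ (n ⊕ m))) (m ⊕ (n ⊕ (n ⊕ m))) ℂ)
    (B : Matrix (n ⊕ (m ⊕ (m ⊕ n))) (n ⊕ (m ⊕ (m ⊕ n))) ℂ) : Prop where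
  zA : Zer A
  zB : Zer B
  aa : ∀ i j, A (.inr (.inr (.inr i))) (.inr (.inr (.inr j))) = A (.inl i) (.inl j)
  xx' : ∀ i j, B (.inr (.inl i)) (.inr (.inl j)) = A (.inl i) (.inl j)
  yy' : ∀ i j, B (.inr (.inr (.inl i))) (.inr (.inr (.inl j))) = A (.inl i) (.inl j)
  aa' : ∀ i j, B (.inr (.inr (.inr i))) (.inr (.inr (.inr j))) = B (.inl i) (.inl j)
  xx : ∀ i j, A (.inr (.inl i)) (.inr (.inl j)) = B (.inl i) (.inl j)
  yy : ∀ i j, A (.inr (.inr (.inl i))) (.inr (.inr (.inl j))) = B (.inl i) (.inl j)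
  xb : ∀ i j, B (.inr (.inr (.inr i))) (.inr (.inr (.inl j))) = A (.inr (.inl i)) (.inl j)
  yb : ∀ i j, B (.inr (.inr (.inr i))) (.inr (.inl j)) = A (.inr (.inr (.inl i))) (.inl j)
  xb' : ∀ i j, A (.inr (.inr (.inr i))) (.inr (.inr (.inl j))) = B (.inr (.inl i)) (.inl j)
  yb' : ∀ i j, A (.inr (.inr (.inr i))) (.inr (.inl j)) = B (.inr (.inr (.inl i))) (.inl j)

theorem Cmp.add {m n : Type} {A A2 : Matrix (m ⊕ (n ⊕ (n ⊕ m))) (m ⊕ (n ⊕ (n ⊕ m))) ℂ}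
    {B B2 : Matrix (n ⊕ (m ⊕ (m ⊕ n))) (n ⊕ (m ⊕ (m ⊕ n))) ℂ} (h : Cmp A B) (h2 : Cmp A2 B2) :
    Cmp (A + A2) (B + B2) := by
  constructor
  · constructor <;> intro i j <;> simp [h.zA.bx, h.zA.by', h.zA.ba, h.zA.xy, h.zA.xa, h.zA.yx,
      h.zA.ya, h2.zA.bx, h2.zA.by', h2.zA.ba, h2.zA.xy, h2.zA.xa, h2.zA.yx, h2.zA.ya]
  · constructor <;> intro i j <;> simp [h.zB.bx, h.zB.by', h.zB.ba, h.zB.xy, h.zB.xa, h.zB.yx,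
      h.zB.ya, h2.zB.bx, h2.zB.by', h2.zB.ba, h2.zB.xy, h2.zB.xa, h2.zB.yx, h2.zB.ya]
  all_goals intro i j
  all_goals simp only [Matrix.add_apply, h.aa, h.xx', h.yy', h.aa', h.xx, h.yy, h.xb, h.yb, h.xb',
      h.yb', h2.aa, h2.xx', h2.yy', h2.aa', h2.xx, h2.yy, h2.xb, h2.yb, h2.xb', h2.yb']

theorem Zer.mul {m n : Type} [Fintype m] [Fintype n]
    {A A2 : Matrix (m ⊕ (n ⊕ (n ⊕ m))) (m ⊕ (n ⊕ (n ⊕ m))) ℂ} (h : Zer A) (h2 : Zer A2) :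
    Zer (A * A2) := by
  constructor <;> intro i j <;> simp only [Matrix.mul_apply, Fintype.sum_sum_type,
    h.bx, h.by', h.ba, h.xy, h.xa, h.yx, h.ya, h2.bx, h2.by', h2.ba, h2.xy, h2.xa, h2.yx,
    h2.ya, mul_zero, zero_mul, Finset.sum_const_zero, add_zero]

theorem Cmp.mul {m n : Type} [Fintype m] [Fintype n]
    {A A2 : Matrix (m ⊕ (n ⊕ (n ⊕ m))) (m ⊕ (n ⊕ (n ⊕ m))) ℂ}
    {B B2 : Matrix (n ⊕ (m ⊕ (m ⊕ n))) (n ⊕ (m ⊕ (m ⊕ n))) ℂ} (h : Cmp A B) (h2 : Cmp A2 B2) :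
    Cmp (A * A2) (B * B2) := by
  constructor
  · exact h.zA.mul h2.zA
  · exact h.zB.mul h2.zB
  all_goals intro i j
  all_goals simp only [Matrix.mul_apply, Fintype.sum_sum_type,
      h.zA.bx, h.zA.by', h.zA.ba, h.zA.xy, h.zA.xa, h.zA.yx,
      h.zA.ya, h2.zA.bx, h2.zA.by', h2.zA.ba, h2.zA.xy, h2.zA.xa, h2.zA.yx, h2.zA.ya,
      h.zB.bx, h.zB.by', h.zB.ba, h.zB.xy, h.zB.xa, h.zB.yx,
      h.zB.ya, h2.zB.bx, h2.zB.by', h2.zB.ba, h2.zB.xy, h2.zB.xa, h2.zB.yx, h2.zB.ya,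
      h.aa, h.xx', h.yy', h.aa', h.xx, h.yy, h.xb, h.yb, h.xb',
      h.yb', h2.aa, h2.xx', h2.yy', h2.aa', h2.xx, h2.yy, h2.xb, h2.yb, h2.xb', h2.yb',
      mul_zero, zero_mul, Finset.sum_const_zero, add_zero, zero_add]

/-- the trace of the corner blocks -/
def cor {m n : Type} [Fintype m] [Fintype n]
    (A : Matrix (m ⊕ (n ⊕ (n ⊕ m))) (m ⊕ (n ⊕ (n ⊕ m))) ℂ)
    (B : Matrix (n ⊕ (m ⊕ (m ⊕ n))) (n ⊕ (m ⊕ (m ⊕ n))) ℂ) : ℂ :=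
  (∑ i, A (.inr (.inr (.inr i))) (.inl i)) + ∑ j, B (.inr (.inr (.inr j))) (.inl j)

theorem swap_sum {m n : Type} [Fintype m] [Fintype n] (f : m → n → ℂ) (g : n → m → ℂ) :
    ∑ i, ∑ j, f i j * g j i = ∑ j, ∑ i, g j i * f i j := by
  rw [Finset.sum_comm]
  exact Finset.sum_congr rfl fun _ _ => Finset.sum_congr rfl fun _ _ => mul_comm _ _

theorem Cmp.comm {m n : Type} [Fintype m] [Fintype n]
    {A A2 : Matrix (m ⊕ (n ⊕ (n ⊕ m))) (m ⊕ (n ⊕ (n ⊕ m))) ℂ}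
    {B B2 : Matrix (n ⊕ (m ⊕ (m ⊕ n))) (n ⊕ (m ⊕ (m ⊕ n))) ℂ} (h : Cmp A B) (h2 : Cmp A2 B2) :
    cor (A * A2) (B * B2) = cor (A2 * A) (B2 * B) := by
  unfold cor
  simp only [Matrix.mul_apply, Fintype.sum_sum_type, Finset.sum_add_distrib,
      h.aa, h.aa', h.xb, h.yb, h.xb', h.yb', h2.aa, h2.aa', h2.xb, h2.yb, h2.xb', h2.yb']
  have e1 := swap_sum (fun i j => A (.inr (.inr (.inr i))) (.inl j))
    (fun j i => A2 (.inl j) (.inl i))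
  have e2 := swap_sum (fun i j => A (.inl i) (.inl j))
    (fun j i => A2 (.inr (.inr (.inr j))) (.inl i))
  have e3 := swap_sum (fun i j => B (.inr (.inr (.inr i))) (.inl j))
    (fun j i => B2 (.inl j) (.inl i))
  have e4 := swap_sum (fun i j => B (.inl i) (.inl j))
    (fun j i => B2 (.inr (.inr (.inr j))) (.inl i))
  have e5 := swap_sum (fun i j => B (.inr (.inr (.inl i))) (.inl j))
    (fun j i => A2 (.inr (.inl j)) (.inl i))
  have e6 := swap_sum (fun i j => B (.inr (.inl i)) (.inl j))
    (fun j i => A2 (.inr (.inr (.inl j))) (.inl i))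
  have e7 := swap_sum (fun i j => A (.inr (.inr (.inl i))) (.inl j))
    (fun j i => B2 (.inr (.inl j)) (.inl i))
  have e8 := swap_sum (fun i j => A (.inr (.inl i)) (.inl j))
    (fun j i => B2 (.inr (.inr (.inl j))) (.inl i))
  rw [e1, e2, e3, e4, e5, e6, e7, e8]
  ring

section gens
variable (p : ℕ) (hp : 2 ≤ p) (s r : ℕ) (hsr : s + r = p)

theorem cmp_E (hsr : s + r = p) (α : ℂ) : Cmp (GE p α s r) (GE p (-α) r s) := by
  have e1 : (p : ℤ) - s = r := by omega
  have e2 : (p : ℤ) - r = s := by omega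
  constructor
  · constructor <;> intro i j <;> rfl
  · constructor <;> intro i j <;> rfl
  all_goals intro i j
  all_goals simp only [GE, Matrix.of_apply, e1, e2, neg_neg]

theorem cmp_F : Cmp (GF s r) (GF r s) := by
  constructor
  · constructor <;> intro i j <;> rfl
  · constructor <;> intro i j <;> rfl
  all_goals intro i j
  all_goals simp only [GF, Matrix.of_apply]

theorem cmp_K (hsr : s + r = p) (α : ℂ) :
    Cmp (Matrix.diagonal (GKd p α s r)) (Matrix.diagonal (GKd p (-α) r s)) := by
  have e1 : (p : ℤ) - s = r := by omega
  have e2 : (p : ℤ) - r = s := by omega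
  constructor
  · constructor <;> intro i j <;> simp
  · constructor <;> intro i j <;> simp
  all_goals intro i j
  all_goals simp [Matrix.diagonal_apply, GKd, e1, e2]

theorem cmp_c (c : ℂ) : Cmp (algebraMap ℂ (Matrix (Gi s r) (Gi s r) ℂ) c)
    (algebraMap ℂ (Matrix (Gi r s) (Gi r s) ℂ) c) := by
  constructor
  · constructor <;> intro i j <;> simp [Matrix.algebraMap_matrix_apply]
  · constructor <;> intro i j <;> simp [Matrix.algebraMap_matrix_apply]
  all_goals intro i j
  all_goals simp [Matrix.algebraMap_matrix_apply]

variable (α : ℂ) (ρ1 : Uq p →ₐ[ℂ] Matrix (Gi s r) (Gi s r) ℂ)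
  (h1 : ρ1 (KK p) = Matrix.diagonal (GKd p α s r) ∧ ρ1 (EE p) = GE p α s r ∧ ρ1 (FF p) = GF s r)
  (ρ2 : Uq p →ₐ[ℂ] Matrix (Gi r s) (Gi r s) ℂ)
  (h2 : ρ2 (KK p) = Matrix.diagonal (GKd p (-α) r s) ∧ ρ2 (EE p) = GE p (-α) r s ∧
    ρ2 (FF p) = GF r s)

theorem cmp_all (hp : 2 ≤ p) (hsr : s + r = p)
  (h1 : ρ1 (KK p) = Matrix.diagonal (GKd p α s r) ∧ ρ1 (EE p) = GE p α s r ∧ ρ1 (FF p) = GF s r)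
  (h2 : ρ2 (KK p) = Matrix.diagonal (GKd p (-α) r s) ∧ ρ2 (EE p) = GE p (-α) r s ∧
    ρ2 (FF p) = GF r s) (x : Uq p) : Cmp (ρ1 x) (ρ2 x) := by
  induction x using Uq_ind p hp with
  | hE => rw [h1.2.1, h2.2.1]; exact cmp_E p s r hsr α
  | hF => rw [h1.2.2, h2.2.2]; exact cmp_F s r
  | hK => rw [h1.1, h2.1]; exact cmp_K p s r hsr α
  | hc c => rw [AlgHom.commutes, AlgHom.commutes]; exact cmp_c s r c
  | hadd x y hx hy => rw [map_add, map_add]; exact hx.add hy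
  | hmul x y hx hy => rw [map_mul, map_mul]; exact hx.mul hy

theorem bb_all (hp : 2 ≤ p) (hz : ∀ x, Zer (ρ1 x))
  (h1 : ρ1 (KK p) = Matrix.diagonal (GKd p α s r) ∧ ρ1 (EE p) = GE p α s r ∧ ρ1 (FF p) = GF s r)
  (ρ : Uq p →ₐ[ℂ] Matrix (Fin s) (Fin s) ℂ)
  (h : ρ (KK p) = XK p α s ∧ ρ (EE p) = XE p α s ∧ ρ (FF p) = XF s) (x : Uq p) :
    ∀ i j, ρ1 x (.inl i) (.inl j) = ρ x i j := by
  induction x using Uq_ind p hp with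
  | hE => rw [h1.2.1, h.2.1]; intro i j; rfl
  | hF => rw [h1.2.2, h.2.2]; intro i j; rfl
  | hK => rw [h1.1, h.1]; intro i j; simp [XK, Matrix.diagonal_apply, GKd]
  | hc c => intro i j; simp [Matrix.algebraMap_matrix_apply]
  | hadd x y hx hy => intro i j; simp [hx, hy]
  | hmul x y hx hy =>
    intro i j
    simp only [map_mul, Matrix.mul_apply, Fintype.sum_sum_type, (hz x).bx, (hz x).by', (hz x).ba,
      zero_mul, Finset.sum_const_zero, add_zero, hx, hy]

end gens

section casG
variable (p : ℕ) (s r : ℕ)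

theorem rho_Kinv {n : Type} [Fintype n] [DecidableEq n] (ρ : Uq p →ₐ[ℂ] Matrix n n ℂ) (d : n → ℂ)
    (h : ρ (KK p) = Matrix.diagonal d) (hd : ∀ i, d i ≠ 0) :
    ρ (KKinv p) = Matrix.diagonal fun i => (d i)⁻¹ := by
  have e : ρ (KKinv p) * ρ (KK p) = 1 := by rw [← map_mul, Kinv_K, map_one]
  have e2 : ρ (KK p) * Matrix.diagonal (fun i => (d i)⁻¹) = 1 := by
    rw [h, Matrix.diagonal_mul_diagonal, ← Matrix.diagonal_one]
    congr 1; ext i; exact mul_inv_cancel₀ (hd i)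
  calc ρ (KKinv p) = ρ (KKinv p) * (ρ (KK p) * Matrix.diagonal (fun i => (d i)⁻¹)) := by
        rw [e2, mul_one]
    _ = _ := by rw [← mul_assoc, e, one_mul]

theorem GKd_ne {α : ℂ} (hα : α = 1 ∨ α = -1) (i : Gi s r) : GKd p α s r i ≠ 0 := by
  have hq := q_ne p
  have h0 : α ≠ 0 := by rcases hα with rfl | rfl <;> simp
  rcases i with i | i | i | i <;>
    exact mul_ne_zero (by simpa using h0) (zpow_ne_zero _ hq)

theorem FE_ab (hr : 1 ≤ r) (α : ℂ) (i j : Fin s) :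
    (GF s r * GE p α s r) (.inr (.inr (.inr i))) (.inl j) = if i = j then 1 else 0 := by
  simp only [Matrix.mul_apply, Fintype.sum_sum_type, GF, GE, Matrix.of_apply, zero_mul, mul_zero,
    Finset.sum_const_zero, add_zero, zero_add]
  by_cases hj : (j : ℕ) = 0
  · rw [Finset.sum_eq_single (⟨r - 1, by omega⟩ : Fin r), Finset.sum_eq_zero]
    · rw [if_pos (show (j : ℕ) = 0 ∧ r - 1 + 1 = r from ⟨hj, by omega⟩)]
      by_cases hi : i = j
      · subst hi; rw [if_pos ⟨by simp only; omega, hj⟩, if_pos rfl]; simp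
      · rw [if_neg hi, if_neg]; · simp
        intro h; apply hi; ext; omega
    · intro x _; rw [if_neg (show ¬ ((x : ℕ) + 1 = j) by omega), mul_zero]
    · intro x _ hx
      rw [if_neg (show ¬ ((j : ℕ) = 0 ∧ (x : ℕ) + 1 = r) from fun h => hx (by
        ext; simp only; omega)), mul_zero]
    · simp
  · rw [Finset.sum_eq_zero, zero_add, Finset.sum_eq_single (⟨j - 1, by omega⟩ : Fin s)]
    · rw [if_pos (show (j : ℕ) - 1 + 1 = j by omega)]
      by_cases hi : i = j
      · subst hi; rw [if_pos (by simp only; omega), if_pos rfl, mul_one]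
      · rw [if_neg hi, if_neg, zero_mul]
        intro h; apply hi; ext; simp only at h; omega
    · intro x _ hx
      rw [if_neg (show ¬ ((x : ℕ) + 1 = j) from fun h => hx (by ext; simp only; omega)), mul_zero]
    · simp
    · intro x _; rw [if_neg (show ¬ ((j : ℕ) = 0 ∧ (x : ℕ) + 1 = r) by omega), mul_zero]

theorem FE_ax (α : ℂ) (i : Fin s) (j : Fin r) :
    (GF s r * GE p α s r) (.inr (.inr (.inr i))) (.inr (.inl j)) = 0 := by
  simp only [Matrix.mul_apply, Fintype.sum_sum_type, GF, GE, Matrix.of_apply, zero_mul, mul_zero,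
    Finset.sum_const_zero, add_zero, zero_add]
  apply Finset.sum_eq_zero
  intro x _
  by_cases h : (x : ℕ) + 1 = j
  · rw [if_neg (show ¬ ((x : ℕ) + 1 = r ∧ (i : ℕ) = 0) by omega), zero_mul]
  · rw [if_neg h, mul_zero]

theorem FE_ay (α : ℂ) (i : Fin s) (j : Fin r) :
    (GF s r * GE p α s r) (.inr (.inr (.inr i))) (.inr (.inr (.inl j))) = 0 := by
  simp only [Matrix.mul_apply, Fintype.sum_sum_type, GF, GE, Matrix.of_apply, zero_mul, mul_zero,
    Finset.sum_const_zero, add_zero, zero_add]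
  apply Finset.sum_eq_zero
  intro x _
  by_cases h : (i : ℕ) = x + 1
  · rw [if_neg (show ¬ ((j : ℕ) = 0 ∧ (x : ℕ) + 1 = s) by omega), mul_zero]
  · rw [if_neg h, zero_mul]

theorem FE_X (α : ℂ) (i j : Fin s) :
    (XF s * XE p α s) i j = if i = j then α * qi p (i : ℕ) * qi p ((s : ℤ) - (i : ℕ)) else 0 := by
  simp only [Matrix.mul_apply, XF, XE, Matrix.of_apply]
  by_cases hj : (j : ℕ) = 0
  · rw [Finset.sum_eq_zero]
    · by_cases hi : i = j
      · subst hi; rw [if_pos rfl, hj]; simp [qi_zero]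
      · rw [if_neg hi]
    · intro x _; rw [if_neg (show ¬ ((x : ℕ) + 1 = j) by omega), mul_zero]
  · rw [Finset.sum_eq_single (⟨j - 1, by omega⟩ : Fin s)]
    · rw [if_pos (show (j : ℕ) - 1 + 1 = j by omega)]
      by_cases hi : i = j
      · subst hi; rw [if_pos (by simp only; omega), if_pos rfl, one_mul]
      · rw [if_neg hi, if_neg, zero_mul]
        intro h; apply hi; ext; simp only at h; omega
    · intro x _ hx
      rw [if_neg (show ¬ ((x : ℕ) + 1 = j) from fun h => hx (by ext; simp only; omega)), mul_zero]
    · simp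

theorem FE_aa (α : ℂ) (i j : Fin s) :
    (GF s r * GE p α s r) (.inr (.inr (.inr i))) (.inr (.inr (.inr j))) =
      if i = j then α * qi p (i : ℕ) * qi p ((s : ℤ) - (i : ℕ)) else 0 := by
  rw [← FE_X]
  simp only [Matrix.mul_apply, Fintype.sum_sum_type, GF, GE, Matrix.of_apply, zero_mul, mul_zero,
    Finset.sum_const_zero, zero_add, XF, XE]

/-- `q^s + q^{-s}` -/
def ts (m : ℤ) : ℂ := q p ^ m + (q p ^ m)⁻¹

theorem cas_scalar (hp : 2 ≤ p) {α : ℂ} (hα : α = 1 ∨ α = -1) (i : ℕ) :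
    dd p ^ 2 * (α * qi p i * qi p ((s : ℤ) - i)) + q p * (α * q p ^ ((s : ℤ) - 1 - 2 * i)) +
      (q p)⁻¹ * (α * q p ^ ((s : ℤ) - 1 - 2 * i))⁻¹ = α * ts p s := by
  have hq := q_ne p
  have e1 := qi_mul_dd p hp (i : ℤ)
  have e2 := qi_mul_dd p hp ((s : ℤ) - i)
  have e3 : dd p ^ 2 * (α * qi p i * qi p ((s : ℤ) - i)) =
      α * (qi p i * dd p) * (qi p ((s : ℤ) - i) * dd p) := by ring
  rw [e3, e1, e2, mul_inv, pm_inv hα, ts, mul_comm (2 : ℤ), zpow_sub₀ hq, zpow_sub₀ hq, zpow_sub₀ hq, zpow_mul, zpow_one]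
  have hs : q p ^ (s : ℤ) ≠ 0 := zpow_ne_zero _ hq
  have hi : q p ^ (i : ℤ) ≠ 0 := zpow_ne_zero _ hq
  generalize q p ^ (s : ℤ) = S at *
  generalize q p ^ (i : ℤ) = I at *
  simp only [zpow_ofNat]
  field_simp
  ring

theorem row_tt (hp : 2 ≤ p) (hr : 1 ≤ r) {α : ℂ} (hα : α = 1 ∨ α = -1)
    (ρ1 : Uq p →ₐ[ℂ] Matrix (Gi s r) (Gi s r) ℂ)
    (h1 : ρ1 (KK p) = Matrix.diagonal (GKd p α s r) ∧ ρ1 (EE p) = GE p α s r ∧ ρ1 (FF p) = GF s r)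
    (x : Uq p) (i : Fin s) :
    ρ1 (tt p * x) (.inr (.inr (.inr i))) (.inl i) =
      α * ts p s * ρ1 x (.inr (.inr (.inr i))) (.inl i) + dd p ^ 2 * ρ1 x (.inl i) (.inl i) := by
  have hKi := rho_Kinv p ρ1 _ h1.1 (GKd_ne p s r hα)
  rw [map_mul, Matrix.mul_apply]
  have ht : ρ1 (tt p) = dd p ^ 2 • (GF s r * GE p α s r) + q p • Matrix.diagonal (GKd p α s r) +
      (q p)⁻¹ • Matrix.diagonal fun i => (GKd p α s r i)⁻¹ := by
    unfold tt
    rw [map_add, map_add, map_smul, map_smul, map_smul, map_mul, h1.1, h1.2.1, h1.2.2, hKi]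
  have hb : ∀ j, ρ1 (tt p) (.inr (.inr (.inr i))) (.inl j) = if i = j then dd p ^ 2 else 0 := by
    intro j
    rw [ht]
    simp [FE_ab p s r hr]
  have hx : ∀ j, ρ1 (tt p) (.inr (.inr (.inr i))) (.inr (.inl j)) = 0 := by
    intro j
    rw [ht]
    simp [FE_ax p s r]
  have hy : ∀ j, ρ1 (tt p) (.inr (.inr (.inr i))) (.inr (.inr (.inl j))) = 0 := by
    intro j
    rw [ht]
    simp [FE_ay p s r]
  have ha : ∀ j, ρ1 (tt p) (.inr (.inr (.inr i))) (.inr (.inr (.inr j))) =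
      if i = j then α * ts p s else 0 := by
    intro j
    rw [ht]
    simp only [Matrix.add_apply, Matrix.smul_apply, FE_aa, Matrix.diagonal_apply, Sum.inr.injEq]
    split_ifs with h
    · rw [← cas_scalar p s hp hα i]; simp only [GKd, smul_eq_mul]
    · simp
  simp only [Fintype.sum_sum_type, hb, hx, hy, ha, zero_mul, Finset.sum_const_zero, zero_add,
    ite_mul, Finset.sum_ite_eq, Finset.mem_univ, if_true]
  ring

theorem X_tt (hp : 2 ≤ p) {α : ℂ} (hα : α = 1 ∨ α = -1) (ρ : Uq p →ₐ[ℂ] Matrix (Fin s) (Fin s) ℂ)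
    (h : ρ (KK p) = XK p α s ∧ ρ (EE p) = XE p α s ∧ ρ (FF p) = XF s) :
    ρ (tt p) = (α * ts p s) • 1 := by
  have h0 : α ≠ 0 := by rcases hα with rfl | rfl <;> simp
  have hKi := rho_Kinv p ρ _ h.1 (fun i => mul_ne_zero h0 (zpow_ne_zero _ (q_ne p)))
  unfold tt
  rw [map_add, map_add, map_smul, map_smul, map_smul, map_mul, h.1, h.2.1, h.2.2, hKi]
  ext i j
  simp only [Matrix.add_apply, Matrix.smul_apply, FE_X, XK, Matrix.diagonal_apply, Matrix.one_apply]
  split_ifs with h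
  · rw [← cas_scalar p s hp hα i]; simp only [smul_eq_mul, mul_one]
  · simp

theorem chi_tt (hp : 2 ≤ p) {α : ℂ} (hα : α = 1 ∨ α = -1) (ρ : Uq p →ₐ[ℂ] Matrix (Fin s) (Fin s) ℂ)
    (h : ρ (KK p) = XK p α s ∧ ρ (EE p) = XE p α s ∧ ρ (FF p) = XF s) (x : Uq p) :
    chiOf p ρ (tt p * x) = α * ts p s * chiOf p ρ x := by
  simp [chiOf, X_tt p s hp hα ρ h]

theorem ts_compl (hp : 2 ≤ p) (hsr : s + r = p) : (-1) * ts p r = ts p s := by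
  have hq := q_ne p
  have hs : q p ^ (s : ℤ) ≠ 0 := zpow_ne_zero _ hq
  have e : (r : ℤ) = p - s := by omega
  rw [ts, ts, e, zpow_sub₀ hq, zpow_natCast (q p) p, q_pow_p p hp]
  field_simp
  ring

end casG

section Gform
variable (p : ℕ) (hp : 2 ≤ p)

/-- packaged facts on the corner form -/
theorem G_generic (hp : 2 ≤ p) (s r s2 : ℕ) (hs2 : s2 = s) (hsr : s + r = p) (hs : 1 ≤ s) (hr : 1 ≤ r)
    (ρ1 : Uq p →ₐ[ℂ] Matrix (Gi s r) (Gi s r) ℂ)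
    (h1 : ρ1 (KK p) = Matrix.diagonal (GKd p 1 s r) ∧ ρ1 (EE p) = GE p 1 s r ∧ ρ1 (FF p) = GF s r)
    (ρ2 : Uq p →ₐ[ℂ] Matrix (Gi r s2) (Gi r s2) ℂ)
    (h2 : ρ2 (KK p) = Matrix.diagonal (GKd p (-1) r s2) ∧ ρ2 (EE p) = GE p (-1) r s2 ∧
      ρ2 (FF p) = GF r s2)
    (σ1 : Uq p →ₐ[ℂ] Matrix (Fin s) (Fin s) ℂ)
    (k1 : σ1 (KK p) = XK p 1 s ∧ σ1 (EE p) = XE p 1 s ∧ σ1 (FF p) = XF s)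
    (σ2 : Uq p →ₐ[ℂ] Matrix (Fin r) (Fin r) ℂ)
    (k2 : σ2 (KK p) = XK p (-1) r ∧ σ2 (EE p) = XE p (-1) r ∧ σ2 (FF p) = XF r)
    (G : Uq p →ₗ[ℂ] ℂ)
    (hG : ∀ x, G x = (∑ i, ρ1 x (.inr (.inr (.inr i))) (.inl i)) +
      ∑ j, ρ2 x (.inr (.inr (.inr j))) (.inl j)) :
    IsSLF p G ∧ (∀ c : ℕ, G (KK p ^ c) = 0) ∧
      ∀ x, G (tt p * x) = ts p s * G x + dd p ^ 2 * (chiOf p σ1 x + chiOf p σ2 x) := by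
  subst hs2
  have hc := cmp_all p s2 r 1 ρ1 ρ2 hp hsr h1 h2
  refine ⟨?_, ?_, ?_⟩
  · intro x y
    rw [hG, hG, map_mul, map_mul, map_mul, map_mul]
    exact (hc x).comm (hc y)
  · intro c
    rw [hG, map_pow, map_pow, h1.1, h2.1, Matrix.diagonal_pow, Matrix.diagonal_pow]
    simp
  · intro x
    rw [hG, hG]
    simp only [row_tt p s2 r hp hr (Or.inl rfl) ρ1 h1, row_tt p r s2 hp hs (Or.inr rfl) ρ2 h2]
    have b1 := bb_all p s2 r 1 ρ1 hp (fun x => (hc x).zA) h1 σ1 k1 x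
    have b2 := bb_all p r s2 (-1) ρ2 hp (fun x => (hc x).zB) h2 σ2 k2 x
    simp only [b1, b2, Finset.sum_add_distrib, ← Finset.mul_sum, ts_compl p s2 r hp hsr]
    simp only [chiOf, LinearMap.comp_apply, AlgHom.toLinearMap_apply, Matrix.traceLinearMap_apply,
      Matrix.trace, Matrix.diag_apply]
    ring

theorem G_props (ρX : (α : ℂ) → (s : ℕ) → (Uq p →ₐ[ℂ] Matrix (Fin s) (Fin s) ℂ))
    (hX : IsXRep p ρX)
    (ρP : (α : ℂ) → (s : ℕ) → (Uq p →ₐ[ℂ] Matrix (PIdx p s) (PIdx p s) ℂ))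
    (hP : IsPRep p ρP) (s : ℕ) (hs : 1 ≤ s) (hsp : s ≤ p - 1) :
    IsSLF p (GOf p ρP s) ∧ (∀ c : ℕ, GOf p ρP s (KK p ^ c) = 0) ∧
      ∀ x, GOf p ρP s (tt p * x) = ts p s * GOf p ρP s x +
        dd p ^ 2 * zeta p hp (1 * q p ^ ((s : ℤ) - 1)) (aq_pow p hp (Or.inl rfl) _) x := by
  rw [zeta_eq p hp ρX hX (Or.inl rfl) s hs (by omega)]
  have a1 := hP 1 (Or.inl rfl) s hs hsp
  have a2 := hP (-1) (Or.inr rfl) (p - s) (by omega) (by omega)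
  rw [PK_eq, PE_eq, PF_eq] at a1 a2
  refine G_generic p hp s (p - s) (p - (p - s)) (by omega) (by omega) hs (by omega) (ρP 1 s) a1
    (ρP (-1) (p - s)) a2 (ρX 1 s) (hX 1 (Or.inl rfl) s hs (by omega)) (ρX (-1) (p - s))
    (hX (-1) (Or.inr rfl) (p - s) (by omega) (by omega)) _ ?_
  intro x
  simp only [GOf, LinearMap.sum_apply, LinearMap.add_apply, LinearMap.comp_apply]
  rfl

end Gform

section two
variable (p : ℕ) (hp : 2 ≤ p) (Δ : Uq p →ₐ[ℂ] (Uq p ⊗[ℂ] Uq p))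
  (ρ : Uq p →ₐ[ℂ] Matrix (Fin 2) (Fin 2) ℂ)

theorem DL2_F (hΔ : IsCoprod p Δ) (h : ρ (KK p) = XK p 1 2 ∧ ρ (EE p) = XE p 1 2 ∧ ρ (FF p) = XF 2) :
    DL p Δ ρ (FF p) = !![(q p)⁻¹ • FF p, 0; 1, q p • FF p] := by
  have hKi := rho_Kinv p ρ _ h.1 (fun i => mul_ne_zero one_ne_zero (zpow_ne_zero _ (q_ne p)))
  ext i j
  rw [DL_F p Δ ρ hΔ, hKi, h.2.2]
  fin_cases i <;> fin_cases j <;> simp [XF, Matrix.diagonal_apply]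

theorem DL2_E (hp : 2 ≤ p) (hΔ : IsCoprod p Δ) (h : ρ (KK p) = XK p 1 2 ∧ ρ (EE p) = XE p 1 2 ∧ ρ (FF p) = XF 2) :
    DL p Δ ρ (EE p) = !![EE p, KK p; 0, EE p] := by
  ext i j
  rw [DL_E p Δ ρ hΔ, h.2.1]
  fin_cases i <;> fin_cases j <;> simp [XE, qi_one p hp]

theorem DL2_K (hΔ : IsCoprod p Δ) (h : ρ (KK p) = XK p 1 2 ∧ ρ (EE p) = XE p 1 2 ∧ ρ (FF p) = XF 2) :
    DL p Δ ρ (KK p) = !![q p • KK p, 0; 0, (q p)⁻¹ • KK p] := by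
  ext i j
  rw [DL_K p Δ ρ hΔ, h.1]
  fin_cases i <;> fin_cases j <;> simp [XK, Matrix.diagonal_apply]

theorem DL2_Kinv (hΔ : IsCoprod p Δ) (h : ρ (KK p) = XK p 1 2 ∧ ρ (EE p) = XE p 1 2 ∧ ρ (FF p) = XF 2) :
    DL p Δ ρ (KKinv p) = !![(q p)⁻¹ • KKinv p, 0; 0, q p • KKinv p] := by
  have hKi := rho_Kinv p ρ _ h.1 (fun i => mul_ne_zero one_ne_zero (zpow_ne_zero _ (q_ne p)))
  ext i j
  rw [DL_Kinv p Δ ρ hΔ, hKi]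
  fin_cases i <;> fin_cases j <;> simp [Matrix.diagonal_apply]

theorem DL2_Kc (hΔ : IsCoprod p Δ) (h : ρ (KK p) = XK p 1 2 ∧ ρ (EE p) = XE p 1 2 ∧ ρ (FF p) = XF 2)
    (c : ℕ) : DL p Δ ρ (KK p ^ c) = !![q p ^ c • KK p ^ c, 0; 0, (q p ^ c)⁻¹ • KK p ^ c] := by
  induction c with
  | zero => simp [Matrix.one_fin_two]
  | succ c ih =>
    rw [pow_succ, map_mul, ih, DL2_K p Δ ρ hΔ h]
    simp [Matrix.mul_fin_two, smul_smul, pow_succ, mul_comm]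

theorem DL2_tt (hp : 2 ≤ p) (hΔ : IsCoprod p Δ) (h : ρ (KK p) = XK p 1 2 ∧ ρ (EE p) = XE p 1 2 ∧ ρ (FF p) = XF 2) :
    DL p Δ ρ (tt p) = !![(q p)⁻¹ • tt p + (q p * dd p) • KK p, ((q p)⁻¹ * dd p ^ 2) • (FF p * KK p);
      dd p ^ 2 • EE p, q p • tt p - ((q p)⁻¹ * dd p) • KK p] := by
  have hq := q_ne p
  unfold tt
  rw [map_add, map_add, map_smul, map_smul, map_smul, map_mul, DL2_E p Δ ρ hp hΔ h,
    DL2_F p Δ ρ hΔ h, DL2_K p Δ ρ hΔ h, DL2_Kinv p Δ ρ hΔ h]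
  unfold dd
  rw [Matrix.mul_fin_two]
  simp only [smul_mul_assoc, zero_mul, mul_zero, add_zero, one_mul, Matrix.smul_of, Matrix.smul_cons,
    Matrix.smul_empty, Matrix.of_add_of, Matrix.add_cons, Matrix.head_cons, Matrix.tail_cons,
    Matrix.empty_add_empty]
  refine congrArg Matrix.of ?_
  refine congrArg₂ Matrix.vecCons (congrArg₂ Matrix.vecCons ?_ (congrArg₂ Matrix.vecCons ?_ rfl))
    (congrArg₂ Matrix.vecCons (congrArg₂ Matrix.vecCons ?_ (congrArg₂ Matrix.vecCons ?_ rfl)) rfl)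
  all_goals match_scalars <;> field_simp <;> ring

theorem tsq : dd p ^ 2 • (FF p * EE p) = tt p - q p • KK p - (q p)⁻¹ • KKinv p := by
  unfold tt; abel

theorem tK_comm : KK p * tt p = tt p * KK p := tt_K p

theorem DL2_quad (hp : 2 ≤ p) (hΔ : IsCoprod p Δ) (h : ρ (KK p) = XK p 1 2 ∧ ρ (EE p) = XE p 1 2 ∧ ρ (FF p) = XF 2) :
    DL p Δ ρ (tt p) * DL p Δ ρ (tt p) = (q p + (q p)⁻¹) • (Matrix.scalar (Fin 2) (tt p) * DL p Δ ρ (tt p))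
      - Matrix.scalar (Fin 2) (tt p * tt p) - (dd p ^ 2) • 1 := by
  have hq := q_ne p
  have hd := dd_ne p hp
  have hd2 : dd p = q p - (q p)⁻¹ := rfl
  have sc : ∀ x : Uq p, Matrix.scalar (Fin 2) x = !![x, 0; 0, x] := by
    intro x; ext i j; fin_cases i <;> fin_cases j <;> simp
  rw [DL2_tt p Δ ρ hp hΔ h, sc, sc, Matrix.one_fin_two, Matrix.mul_fin_two, Matrix.mul_fin_two]
  simp only [zero_mul, add_zero, zero_add, Matrix.smul_of, Matrix.smul_cons,
    Matrix.smul_empty, Matrix.of_sub_of, Matrix.sub_cons, Matrix.head_cons, Matrix.tail_cons,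
    Matrix.empty_sub_empty, smul_zero, sub_zero]
  have f1 : (FF p * KK p) * EE p = (q p ^ 2 * (dd p ^ 2)⁻¹) •
      (tt p * KK p - q p • (KK p * KK p) - (q p)⁻¹ • 1) := by
    have : (FF p * KK p) * EE p = (q p ^ 2 * (dd p ^ 2)⁻¹) • ((dd p ^ 2 • (FF p * EE p)) * KK p) := by
      rw [mul_assoc, KE, mul_smul_comm, ← mul_assoc, smul_mul_assoc, smul_smul]
      congr 1; field_simp
    rw [this, tsq, sub_mul, sub_mul, smul_mul_assoc, smul_mul_assoc, Kinv_K]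
  have f2 : EE p * (FF p * KK p) = (dd p ^ 2)⁻¹ •
      (tt p * KK p - (q p)⁻¹ • (KK p * KK p) - q p • 1) := by
    have : EE p * (FF p * KK p) = (dd p ^ 2)⁻¹ • ((dd p ^ 2 • (FF p * EE p) + dd p • (KK p - KKinv p)) * KK p) := by
      rw [← mul_assoc, EF, ← smul_mul_assoc, smul_add, smul_smul, smul_smul,
        inv_mul_cancel₀ (pow_ne_zero 2 hd), one_smul]
      congr 3; field_simp
    rw [this, tsq, add_mul, sub_mul, sub_mul, smul_mul_assoc, smul_mul_assoc, smul_mul_assoc, sub_mul, Kinv_K, hd2]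
    match_scalars <;> field_simp <;> ring
  have f3 : KK p * (FF p * KK p) = (q p ^ 2)⁻¹ • (FF p * KK p * KK p) := by
    rw [← mul_assoc, KF, smul_mul_assoc]
  have f4 : FF p * KK p * tt p = tt p * (FF p * KK p) := tt_comm p hp _
  have f5 : EE p * tt p = tt p * EE p := tt_comm p hp _
  refine congrArg Matrix.of ?_
  refine congrArg₂ Matrix.vecCons (congrArg₂ Matrix.vecCons ?_ (congrArg₂ Matrix.vecCons ?_ rfl))
    (congrArg₂ Matrix.vecCons (congrArg₂ Matrix.vecCons ?_ (congrArg₂ Matrix.vecCons ?_ rfl)) rfl)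
  all_goals simp only [add_mul, mul_add, sub_mul, mul_sub, smul_mul_assoc, mul_smul_comm, f1, f2,
    f3, f4, f5, KE, tt_K]
  · rw [hd2] at hd ⊢
    match_scalars <;> field_simp <;> ring
  · rw [hd2] at hd ⊢
    match_scalars <;> field_simp <;> ring
  · rw [hd2] at hd ⊢
    match_scalars <;> field_simp <;> ring
  · rw [hd2] at hd ⊢
    match_scalars <;> field_simp <;> ring

end two

section rec2
variable (p : ℕ) (Δ : Uq p →ₐ[ℂ] (Uq p ⊗[ℂ] Uq p))
  (ρ : Uq p →ₐ[ℂ] Matrix (Fin 2) (Fin 2) ℂ)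

/-- multiplication by the Casimir, applied to a form -/
def sh (ψ : Uq p →ₗ[ℂ] ℂ) : Uq p →ₗ[ℂ] ℂ := ψ.comp (LinearMap.mulLeft ℂ (tt p))

theorem sh_apply (ψ : Uq p →ₗ[ℂ] ℂ) (x : Uq p) : sh p ψ x = ψ (tt p * x) := rfl

theorem C_quad (hp : 2 ≤ p) (hΔ : IsCoprod p Δ)
    (h : ρ (KK p) = XK p 1 2 ∧ ρ (EE p) = XE p 1 2 ∧ ρ (FF p) = XF 2) (ψ : Uq p →ₗ[ℂ] ℂ) (x : Uq p) :
    conv p Δ (chiOf p ρ) ψ (tt p * (tt p * x)) =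
      (q p + (q p)⁻¹) * conv p Δ (chiOf p ρ) (sh p ψ) (tt p * x)
      - conv p Δ (chiOf p ρ) (sh p (sh p ψ)) x - dd p ^ 2 * conv p Δ (chiOf p ρ) ψ x := by
  simp only [conv_DL, sh_apply]
  have e : DL p Δ ρ (tt p * (tt p * x)) = (DL p Δ ρ (tt p) * DL p Δ ρ (tt p)) * DL p Δ ρ x := by
    rw [map_mul, map_mul, mul_assoc]
  have tr : ∀ (y : Uq p) (M : Matrix (Fin 2) (Fin 2) (Uq p)),
      (Matrix.scalar (Fin 2) y * M).trace = y * M.trace := by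
    intro y M
    simp [Matrix.trace, Matrix.scalar_apply, Matrix.diagonal_mul, mul_add]
  rw [e, DL2_quad p Δ ρ hp hΔ h, sub_mul, sub_mul, smul_mul_assoc, mul_assoc, ← map_mul, smul_mul_assoc, one_mul,
    Matrix.trace_sub, Matrix.trace_sub, Matrix.trace_smul, Matrix.trace_smul, tr, tr, map_sub, map_sub,
    map_smul, map_smul, smul_eq_mul, smul_eq_mul, mul_assoc (tt p)]

theorem C_K (hΔ : IsCoprod p Δ)
    (h : ρ (KK p) = XK p 1 2 ∧ ρ (EE p) = XE p 1 2 ∧ ρ (FF p) = XF 2) (ψ : Uq p →ₗ[ℂ] ℂ) (c : ℕ) :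
    conv p Δ (chiOf p ρ) ψ (KK p ^ c) = (q p ^ c + (q p ^ c)⁻¹) * ψ (KK p ^ c) := by
  rw [conv_DL, DL2_Kc p Δ ρ hΔ h, Matrix.trace_fin_two]
  simp [add_mul]

theorem C_tK (hp : 2 ≤ p) (hΔ : IsCoprod p Δ)
    (h : ρ (KK p) = XK p 1 2 ∧ ρ (EE p) = XE p 1 2 ∧ ρ (FF p) = XF 2) (ψ : Uq p →ₗ[ℂ] ℂ) (c : ℕ) :
    conv p Δ (chiOf p ρ) ψ (tt p * KK p ^ c) =
      (q p ^ c * (q p)⁻¹ + (q p ^ c)⁻¹ * q p) * ψ (tt p * KK p ^ c)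
      + dd p * (q p ^ c * q p - (q p ^ c)⁻¹ * (q p)⁻¹) * ψ (KK p ^ (c + 1)) := by
  rw [conv_DL, map_mul, DL2_Kc p Δ ρ hΔ h, DL2_tt p Δ ρ hp hΔ h, Matrix.mul_fin_two, Matrix.trace_fin_two]
  simp only [Matrix.of_apply, Matrix.cons_val', Matrix.cons_val_zero, Matrix.cons_val_one, Matrix.cons_val_fin_one,
    mul_zero, add_zero, zero_add, add_mul, sub_mul, smul_mul_assoc, mul_smul_comm, map_add, map_sub, map_smul,
    smul_eq_mul, pow_succ']
  ring

/-- eigenform recursion: uniqueness lemma for `χ₂ ψ` -/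
theorem chi2_chi (hp : 2 ≤ p) (hΔ : IsCoprod p Δ)
    (h : ρ (KK p) = XK p 1 2 ∧ ρ (EE p) = XE p 1 2 ∧ ρ (FF p) = XF 2) (ψ φ₁ φ₂ : Uq p →ₗ[ℂ] ℂ)
    (q1 : ℂ) (hq1 : q1 ≠ 0)
    (hψ : IsSLF p ψ) (h1 : IsSLF p φ₁) (h2 : IsSLF p φ₂)
    (ht : ∀ x, ψ (tt p * x) = (q1 + q1⁻¹) * ψ x)
    (ht1 : ∀ x, φ₁ (tt p * x) = (q1 * q p + (q1 * q p)⁻¹) * φ₁ x)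
    (ht2 : ∀ x, φ₂ (tt p * x) = (q1 * (q p)⁻¹ + (q1 * (q p)⁻¹)⁻¹) * φ₂ x)
    (hK : ∀ c : ℕ, (q p ^ c - (q p ^ c)⁻¹) * ψ (KK p ^ c) = q1 ^ c - (q1 ^ c)⁻¹)
    (hK1 : ∀ c : ℕ, φ₁ (KK p ^ c) = q p ^ c * ψ (KK p ^ c) + (q1 ^ c)⁻¹)
    (hK2 : ∀ c : ℕ, φ₂ (KK p ^ c) = (q p ^ c)⁻¹ * ψ (KK p ^ c) - (q1 ^ c)⁻¹) :
    conv p Δ (chiOf p ρ) ψ = φ₁ + φ₂ := by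
  have hq := q_ne p
  have key : conv p Δ (chiOf p ρ) ψ - (φ₁ + φ₂) = 0 := by
    have e1 : sh p ψ = (q1 + q1⁻¹) • ψ := by ext x; simp [sh_apply, ht]
    have e2 : sh p (sh p ψ) = (q1 + q1⁻¹)^2 • ψ := by
      ext x; simp only [sh_apply, ht, LinearMap.smul_apply, smul_eq_mul]; ring
    refine slf_zero2 p hp _ ?_ ((q p + (q p)⁻¹) * (q1 + q1⁻¹)) (-((q1 + q1⁻¹)^2 + dd p ^ 2)) ?_ ?_ ?_
    · have := conv_slf p Δ (chiOf p ρ) ψ (chi_slf p ρ) hψ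
      intro x y
      simp only [LinearMap.sub_apply, LinearMap.add_apply]
      rw [this x y, h1 x y, h2 x y]
    · intro x
      simp only [LinearMap.sub_apply, LinearMap.add_apply]
      rw [C_quad p Δ ρ hp hΔ h, e2, e1, conv_smul_right, conv_smul_right]
      simp only [ht1, ht2, LinearMap.smul_apply, smul_eq_mul]
      unfold dd
      field_simp
      ring
    · intro c
      simp only [LinearMap.sub_apply, LinearMap.add_apply]
      rw [C_K p Δ ρ hΔ h, hK1, hK2]; ring
    · intro c
      simp only [LinearMap.sub_apply, LinearMap.add_apply]
      rw [C_tK p Δ ρ hp hΔ h, ht, ht1, ht2, hK1, hK2]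
      have a := hK c
      have b := hK (c + 1)
      rw [pow_succ (q p), pow_succ q1] at b
      have hb : (q p ^ c * q p - (q p ^ c)⁻¹ * (q p)⁻¹) * ψ (KK p ^ (c+1)) = q1 ^ c * q1 - (q1^c)⁻¹ * q1⁻¹ := by
        rw [← mul_inv, ← mul_inv]; exact b
      have : dd p * (q p ^ c * q p - (q p ^ c)⁻¹ * (q p)⁻¹) * ψ (KK p ^ (c + 1)) = dd p * (q1 ^ c * q1 - (q1^c)⁻¹ * q1⁻¹) := by
        rw [mul_assoc, hb]
      rw [this]
      have hqc : q p ^ c ≠ 0 := pow_ne_zero _ hq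
      have hqc1 : q1 ^ c ≠ 0 := pow_ne_zero _ hq1
      generalize ψ (KK p ^ c) = S at *
      generalize q p ^ c = Q at *
      generalize q1 ^ c = R at *
      unfold dd
      rw [mul_inv, mul_inv, inv_inv]
      have hi : q p * (q p)⁻¹ = 1 := mul_inv_cancel₀ hq
      linear_combination (-(q p - (q p)⁻¹) * q1) * a
  exact sub_eq_zero.1 key

end rec2

section rec3
variable (p : ℕ) (Δ : Uq p →ₐ[ℂ] (Uq p ⊗[ℂ] Uq p))
  (ρ : Uq p →ₐ[ℂ] Matrix (Fin 2) (Fin 2) ℂ)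

theorem chi2_G (hp : 2 ≤ p) (hΔ : IsCoprod p Δ)
    (h : ρ (KK p) = XK p 1 2 ∧ ρ (EE p) = XE p 1 2 ∧ ρ (FF p) = XF 2) (ψ φ₁ φ₂ Z Z₁ Z₂ : Uq p →ₗ[ℂ] ℂ)
    (q1 : ℂ) (hq1 : q1 ≠ 0)
    (hψ : IsSLF p ψ) (h1 : IsSLF p φ₁) (h2 : IsSLF p φ₂)
    (ht : ∀ x, ψ (tt p * x) = (q1 + q1⁻¹) * ψ x + dd p * (q1 - q1⁻¹) * Z x)
    (ht1 : ∀ x, φ₁ (tt p * x) = (q1 * q p + q1⁻¹ * (q p)⁻¹) * φ₁ x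
      + dd p * (q1 * q p - q1⁻¹ * (q p)⁻¹) * Z₁ x)
    (ht2 : ∀ x, φ₂ (tt p * x) = (q1 * (q p)⁻¹ + q1⁻¹ * q p) * φ₂ x
      + dd p * (q1 * (q p)⁻¹ - q1⁻¹ * q p) * Z₂ x)
    (hz : ∀ x, Z (tt p * x) = (q1 + q1⁻¹) * Z x)
    (hz1 : ∀ x, Z₁ (tt p * x) = (q1 * q p + q1⁻¹ * (q p)⁻¹) * Z₁ x)
    (hz2 : ∀ x, Z₂ (tt p * x) = (q1 * (q p)⁻¹ + q1⁻¹ * q p) * Z₂ x)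
    (hC : conv p Δ (chiOf p ρ) Z = Z₁ + Z₂)
    (hK : ∀ c : ℕ, ψ (KK p ^ c) = 0) (hK1 : ∀ c : ℕ, φ₁ (KK p ^ c) = 0) (hK2 : ∀ c : ℕ, φ₂ (KK p ^ c) = 0)
    (hZK : ∀ c : ℕ, (q p ^ (2 * c) - 1) * Z (KK p ^ c) = 0)
    (hZK1 : ∀ c : ℕ, Z₁ (KK p ^ c) = q p ^ c * Z (KK p ^ c))
    (hZK2 : ∀ c : ℕ, Z₂ (KK p ^ c) = (q p ^ c)⁻¹ * Z (KK p ^ c)) :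
    conv p Δ (chiOf p ρ) ψ = φ₁ + φ₂ := by
  have hq := q_ne p
  have key : conv p Δ (chiOf p ρ) ψ - (φ₁ + φ₂) = 0 := by
    have e1 : sh p ψ = (q1 + q1⁻¹) • ψ + (dd p * (q1 - q1⁻¹)) • Z := by ext x; simp [sh_apply, ht]
    have e2 : sh p (sh p ψ) = (q1 + q1⁻¹)^2 • ψ + (2 * (q1 + q1⁻¹) * (dd p * (q1 - q1⁻¹))) • Z := by
      ext x
      simp only [sh_apply, ht, hz, LinearMap.add_apply, LinearMap.smul_apply, smul_eq_mul]; ring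
    refine slf_zero2 p hp _ ?_ ((q p + (q p)⁻¹) * (q1 + q1⁻¹)) (-((q1 + q1⁻¹)^2 + dd p ^ 2)) ?_ ?_ ?_
    · have := conv_slf p Δ (chiOf p ρ) ψ (chi_slf p ρ) hψ
      intro x y
      simp only [LinearMap.sub_apply, LinearMap.add_apply]
      rw [this x y, h1 x y, h2 x y]
    · intro x
      simp only [LinearMap.sub_apply, LinearMap.add_apply]
      rw [C_quad p Δ ρ hp hΔ h, e2, e1, conv_add_right, conv_add_right, conv_smul_right, conv_smul_right,
        conv_smul_right, conv_smul_right, hC]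
      simp only [ht1, ht2, hz1, hz2, LinearMap.add_apply, LinearMap.smul_apply, smul_eq_mul]
      unfold dd
      field_simp
      ring
    · intro c
      simp only [LinearMap.sub_apply, LinearMap.add_apply]
      rw [C_K p Δ ρ hΔ h, hK1, hK2, hK]; ring
    · intro c
      simp only [LinearMap.sub_apply, LinearMap.add_apply]
      rw [C_tK p Δ ρ hp hΔ h, ht, ht1, ht2, hK1, hK2, hK, hK, hZK1, hZK2]
      have a := hZK c
      rw [mul_comm 2 c, pow_mul] at a
      have hqc : q p ^ c ≠ 0 := pow_ne_zero _ hq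
      generalize Z (KK p ^ c) = S at *
      generalize q p ^ c = Q at *
      have a' : Q⁻¹ * S = Q * S := by
        field_simp
        linear_combination -a
      linear_combination (dd p * ((q1 - q1⁻¹) * q p - (q1 * (q p)⁻¹ - q1⁻¹ * q p))) * a'
  exact sub_eq_zero.1 key

end rec3

section chars
variable (p : ℕ)

theorem chi_K {α : ℂ} {s : ℕ} (ρ : Uq p →ₐ[ℂ] Matrix (Fin s) (Fin s) ℂ) (h : ρ (KK p) = XK p α s) (c : ℕ) :
    chiOf p ρ (KK p ^ c) = ∑ i ∈ Finset.range s, (α * q p ^ ((s : ℤ) - 1 - 2 * (i : ℕ))) ^ c := by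
  simp only [chiOf, LinearMap.comp_apply, AlgHom.toLinearMap_apply, map_pow, h, XK,
    Matrix.diagonal_pow, Matrix.traceLinearMap_apply, Matrix.trace_diagonal]
  rw [← Fin.sum_univ_eq_sum_range (fun i => (α * q p ^ ((s : ℤ) - 1 - 2 * (i : ℕ))) ^ c) s]
  rfl

/-- value of the character of `X^+(s)` at `K^c` -/
def SS (s c : ℕ) : ℂ := ∑ i ∈ Finset.range s, (1 * q p ^ ((s : ℤ) - 1 - 2 * (i : ℕ))) ^ c

theorem SS_up (s c : ℕ) : SS p (s + 1) c = q p ^ c * SS p s c + ((q p ^ s) ^ c)⁻¹ := by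
  have hq := q_ne p
  unfold SS
  rw [Finset.sum_range_succ, Finset.mul_sum]
  congr 1
  · refine Finset.sum_congr rfl fun i _ => ?_
    rw [← mul_pow, one_mul, one_mul, ← zpow_one_add₀ hq]
    congr 2; push_cast; ring
  · rw [one_mul, ← inv_pow, ← zpow_natCast (q p) s, ← zpow_neg]
    congr 2; push_cast; ring

theorem SS_mul (s c : ℕ) : (q p ^ c - (q p ^ c)⁻¹) * SS p s c = (q p ^ s) ^ c - ((q p ^ s) ^ c)⁻¹ := by
  have hqc : q p ^ c ≠ 0 := pow_ne_zero _ (q_ne p)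
  have hqs : (q p ^ s) ^ c ≠ 0 := pow_ne_zero _ (pow_ne_zero _ (q_ne p))
  induction s with
  | zero => simp [SS]
  | succ s ih =>
    have hqs : (q p ^ s) ^ c ≠ 0 := pow_ne_zero _ (pow_ne_zero _ (q_ne p))
    have hs := ih hqs
    rw [SS_up, pow_succ (q p) s, mul_pow, mul_inv]
    have hi : q p ^ c * (q p ^ c)⁻¹ = 1 := mul_inv_cancel₀ hqc
    linear_combination (q p ^ c) * hs

theorem SS_down (s c : ℕ) : SS p s c = (q p ^ c)⁻¹ * SS p (s + 1) c - ((q p ^ (s + 1)) ^ c)⁻¹ := by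
  have hqc : q p ^ c ≠ 0 := pow_ne_zero _ (q_ne p)
  rw [SS_up, pow_succ (q p) s, mul_pow, mul_inv]
  field_simp
  ring

end chars

section inst
variable (p : ℕ) (hp : 2 ≤ p) (Δ : Uq p →ₐ[ℂ] (Uq p ⊗[ℂ] Uq p))
variable (ρX : (α : ℂ) → (s : ℕ) → (Uq p →ₐ[ℂ] Matrix (Fin s) (Fin s) ℂ))
variable (ρP : (α : ℂ) → (s : ℕ) → (Uq p →ₐ[ℂ] Matrix (PIdx p s) (PIdx p s) ℂ))

theorem chi_all (hp : 2 ≤ p) (hX : IsXRep p ρX) (m : ℕ) (hm : m ≤ p) :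
    (∀ x, chiOf p (ρX 1 m) (tt p * x) = (q p ^ m + (q p ^ m)⁻¹) * chiOf p (ρX 1 m) x) ∧
    ∀ c, chiOf p (ρX 1 m) (KK p ^ c) = SS p m c := by
  rcases Nat.eq_zero_or_pos m with h0 | h0
  · rw [chi_zero p m h0]
    subst h0
    simp [SS]
  · have h := hX 1 (Or.inl rfl) m h0 hm
    refine ⟨fun x => ?_, fun c => chi_K p _ h.1 c⟩
    rw [chi_tt p m hp (Or.inl rfl) _ h, one_mul, ts, zpow_natCast]

theorem C_chi (hp : 2 ≤ p) (hX : IsXRep p ρX) (hΔ : IsCoprod p Δ) (m : ℕ) (hm : m + 2 ≤ p) :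
    conv p Δ (chiOf p (ρX 1 2)) (chiOf p (ρX 1 (m + 1))) = chiOf p (ρX 1 (m + 2)) + chiOf p (ρX 1 m) := by
  have hq := q_ne p
  have a0 := chi_all p ρX hp hX (m + 1) (by omega)
  have a1 := chi_all p ρX hp hX (m + 2) (by omega)
  have a2 := chi_all p ρX hp hX m (by omega)
  refine chi2_chi p Δ _ hp hΔ (hX 1 (Or.inl rfl) 2 (by omega) hp) _ _ _ (q p ^ (m + 1))
    (pow_ne_zero _ hq) (chi_slf p _) (chi_slf p _) (chi_slf p _) a0.1 ?_ ?_ ?_ ?_ ?_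
  · intro x; rw [← pow_succ]; exact a1.1 x
  · intro x; rw [pow_succ, mul_inv_cancel_right₀ hq]; exact a2.1 x
  · intro c; rw [a0.2]; exact SS_mul p _ _
  · intro c; rw [a0.2, a1.2]; exact SS_up p _ _
  · intro c; rw [a0.2, a2.2]; exact SS_down p _ _

/-- characters of the Verma-type modules of highest weight `q^(m-1)` -/
def zz (m : ℕ) : Uq p →ₗ[ℂ] ℂ := zeta p hp (1 * q p ^ ((m : ℤ) - 1)) (aq_pow p hp (Or.inl rfl) _)

theorem zeta_congr {l l2 : ℂ} (h : l = l2) (hl : l ^ (2 * p) = 1) (hl2 : l2 ^ (2 * p) = 1) :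
    zeta p hp l hl = zeta p hp l2 hl2 := by
  subst h; rfl

theorem zz_tt (m : ℕ) (x : Uq p) : zz p hp m (tt p * x) = (q p ^ m + (q p ^ m)⁻¹) * zz p hp m x := by
  have e : 1 * q p ^ ((m : ℤ) - 1) * q p = q p ^ m := by
    rw [one_mul, ← zpow_add_one₀ (q_ne p), sub_add_cancel, zpow_natCast]
  unfold zz
  rw [zeta_tt, e]

theorem zz_K (m c : ℕ) : zz p hp (m + 1) (KK p ^ c) = q p ^ c * zz p hp m (KK p ^ c) := by
  unfold zz
  rw [zeta_K, zeta_K, ← mul_assoc, ← mul_pow, one_mul, one_mul, ← zpow_one_add₀ (q_ne p)]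
  congr 3; push_cast; ring

theorem C_zz (hX : IsXRep p ρX) (hΔ : IsCoprod p Δ) (m : ℕ) :
    conv p Δ (chiOf p (ρX 1 2)) (zz p hp (m + 1)) = zz p hp (m + 2) + zz p hp m := by
  have hq := q_ne p
  have a2 := chi_all p ρX hp hX 2 hp
  have e1 : (1 * q p ^ (((m + 1 : ℕ) : ℤ) - 1)) * q p = 1 * q p ^ (((m + 2 : ℕ) : ℤ) - 1) := by
    rw [one_mul, one_mul, ← zpow_add_one₀ hq]; congr 1; push_cast; ring
  have e2 : (1 * q p ^ (((m + 1 : ℕ) : ℤ) - 1)) * (q p)⁻¹ = 1 * q p ^ ((m : ℤ) - 1) := by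
    rw [one_mul, one_mul, ← zpow_sub_one₀ hq]; congr 1; push_cast; ring
  have hk : ∀ j : Fin 2, (![q p, (q p)⁻¹] j) ^ (2 * p) = 1 := by
    intro j; fin_cases j <;> simp [q_pow_two_p p hp]
  ext x
  have := conv_zeta_right p hp Δ (1 * q p ^ (((m + 1 : ℕ) : ℤ) - 1)) (aq_pow p hp (Or.inl rfl) _)
    (ι := Fin 2) ![q p, (q p)⁻¹] (fun _ => 1) (chiOf p (ρX 1 2))
    (fun j => by rw [mul_pow, hk, aq_pow p hp (Or.inl rfl), one_mul]) hΔ (chi_slf p _)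
    (fun c => by
      rw [a2.2, SS, Finset.sum_range_succ, Finset.sum_range_one, Fin.sum_univ_two]
      norm_num) hk x
  unfold zz
  rw [this, Fin.sum_univ_two, LinearMap.add_apply]
  refine congrArg₂ (· + ·) ((one_mul _).trans ?_) ((one_mul _).trans ?_)
  · exact LinearMap.congr_fun (zeta_congr p hp e1 _ _) x
  · exact LinearMap.congr_fun (zeta_congr p hp e2 _ _) x

/-- `[m] G_m` -/
def GG (m : ℕ) : Uq p →ₗ[ℂ] ℂ := qi p m • GOf p ρP m

theorem GG_props (hX : IsXRep p ρX) (hP : IsPRep p ρP) (m : ℕ) (hm : m ≤ p - 1) :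
    IsSLF p (GG p ρP m) ∧ (∀ c : ℕ, GG p ρP m (KK p ^ c) = 0) ∧
      ∀ x, GG p ρP m (tt p * x) = (q p ^ m + (q p ^ m)⁻¹) * GG p ρP m x +
        dd p * (q p ^ m - (q p ^ m)⁻¹) * zz p hp m x := by
  unfold GG
  rcases Nat.eq_zero_or_pos m with h0 | h0
  · subst h0
    have : qi p ((0 : ℕ) : ℤ) = 0 := qi_zero p
    rw [this, zero_smul]
    refine ⟨fun x y => rfl, fun c => rfl, fun x => ?_⟩
    simp
  · obtain ⟨a, b, c⟩ := G_props p hp ρX hX ρP hP m h0 hm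
    refine ⟨fun x y => ?_, fun k => ?_, fun x => ?_⟩
    · simp only [LinearMap.smul_apply]; rw [a x y]
    · simp only [LinearMap.smul_apply]; rw [b k, smul_zero]
    · simp only [LinearMap.smul_apply, smul_eq_mul]
      rw [c x]
      have e := qi_mul_dd p hp (m : ℤ)
      rw [zpow_natCast] at e
      rw [← e, ts, zpow_natCast, zz]
      ring

theorem C_GG (hp : 2 ≤ p) (hX : IsXRep p ρX) (hP : IsPRep p ρP) (hΔ : IsCoprod p Δ) (m : ℕ) (hm : m + 2 ≤ p - 1) :
    conv p Δ (chiOf p (ρX 1 2)) (GG p ρP (m + 1)) = GG p ρP (m + 2) + GG p ρP m := by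
  have hq := q_ne p
  obtain ⟨a0, b0, c0⟩ := GG_props p hp ρX ρP hX hP (m + 1) (by omega)
  obtain ⟨a1, b1, c1⟩ := GG_props p hp ρX ρP hX hP (m + 2) (by omega)
  obtain ⟨a2, b2, c2⟩ := GG_props p hp ρX ρP hX hP m (by omega)
  have e1 : q p ^ (m + 1) * q p = q p ^ (m + 2) := (pow_succ _ _).symm
  have e1' : (q p ^ (m + 1))⁻¹ * (q p)⁻¹ = (q p ^ (m + 2))⁻¹ := by rw [← mul_inv, e1]
  have e2 : q p ^ (m + 1) * (q p)⁻¹ = q p ^ m := by rw [pow_succ, mul_inv_cancel_right₀ hq]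
  have e2' : (q p ^ (m + 1))⁻¹ * q p = (q p ^ m)⁻¹ := by
    rw [pow_succ, mul_inv, inv_mul_cancel_right₀ hq]
  refine chi2_G p Δ _ hp hΔ (hX 1 (Or.inl rfl) 2 (by omega) hp) _ _ _ (zz p hp (m + 1)) (zz p hp (m + 2))
    (zz p hp m) (q p ^ (m + 1)) (pow_ne_zero _ hq) a0 a1 a2 c0 ?_ ?_ (zz_tt p hp _) ?_ ?_
    (C_zz p hp Δ ρX hX hΔ m) b0 b1 b2 ?_ ?_ ?_
  · rw [e1, e1']; exact c1
  · rw [e2, e2']; exact c2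
  · rw [e1, e1']; exact zz_tt p hp _
  · rw [e2, e2']; exact zz_tt p hp _
  · intro c; unfold zz; exact zeta_K' p hp _ _ c
  · intro c; exact zz_K p hp (m + 1) c
  · intro c; rw [zz_K p hp m c, inv_mul_cancel_left₀ (pow_ne_zero _ hq)]

end inst

section coassoc
variable (p : ℕ) (hp : 2 ≤ p) (Δ : Uq p →ₐ[ℂ] (Uq p ⊗[ℂ] Uq p))

theorem coassoc (hp : 2 ≤ p) (hΔ : IsCoprod p Δ) :
    ((Algebra.TensorProduct.assoc ℂ ℂ ℂ (Uq p) (Uq p) (Uq p)).toAlgHom.comp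
      ((Algebra.TensorProduct.map Δ (AlgHom.id ℂ (Uq p))).comp Δ)) =
      (Algebra.TensorProduct.map (AlgHom.id ℂ (Uq p)) Δ).comp Δ := by
  obtain ⟨hE, hF, hK, hKi⟩ := hΔ
  apply Uq_hom_ext p hp
  · simp [hE, hK, TensorProduct.add_tmul, TensorProduct.tmul_add, Algebra.TensorProduct.one_def, add_assoc]
  · simp [hF, hKi, TensorProduct.add_tmul, TensorProduct.tmul_add, Algebra.TensorProduct.one_def, add_assoc]
  · simp [hK]

theorem conv_assoc (hp : 2 ≤ p) (hΔ : IsCoprod p Δ) (a b c : Uq p →ₗ[ℂ] ℂ) :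
    conv p Δ (conv p Δ a b) c = conv p Δ a (conv p Δ b c) := by
  ext x
  have e := AlgHom.congr_fun (coassoc p Δ hp hΔ) x
  let T : Uq p ⊗[ℂ] (Uq p ⊗[ℂ] Uq p) →ₗ[ℂ] ℂ :=
    (LinearMap.mul' ℂ ℂ).comp (TensorProduct.map a ((LinearMap.mul' ℂ ℂ).comp (TensorProduct.map b c)))
  have hl : ∀ X : Uq p ⊗[ℂ] Uq p, LinearMap.mul' ℂ ℂ (TensorProduct.map (conv p Δ a b) c X) =
      T (Algebra.TensorProduct.assoc ℂ ℂ ℂ (Uq p) (Uq p) (Uq p)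
        (Algebra.TensorProduct.map Δ (AlgHom.id ℂ (Uq p)) X)) := by
    intro X
    induction X using TensorProduct.induction_on with
    | zero => simp
    | add u v hu hv => simp only [map_add, hu, hv]
    | tmul u v =>
      simp only [TensorProduct.map_tmul, LinearMap.mul'_apply, Algebra.TensorProduct.map_tmul, AlgHom.coe_id, id,
        conv, LinearMap.comp_apply, AlgHom.toLinearMap_apply]
      generalize Δ u = Y
      induction Y using TensorProduct.induction_on with
      | zero => simp
      | add u v hu hv => simp only [map_add, TensorProduct.add_tmul, add_mul, hu, hv]
      | tmul y z => simp [T, mul_assoc]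
  have hr : ∀ X : Uq p ⊗[ℂ] Uq p, LinearMap.mul' ℂ ℂ (TensorProduct.map a (conv p Δ b c) X) =
      T (Algebra.TensorProduct.map (AlgHom.id ℂ (Uq p)) Δ X) := by
    intro X
    induction X using TensorProduct.induction_on with
    | zero => simp
    | add u v hu hv => simp only [map_add, hu, hv]
    | tmul u v => simp [T, conv]
  have e' : T (Algebra.TensorProduct.assoc ℂ ℂ ℂ (Uq p) (Uq p) (Uq p)
        (Algebra.TensorProduct.map Δ (AlgHom.id ℂ (Uq p)) (Δ x))) =
      T (Algebra.TensorProduct.map (AlgHom.id ℂ (Uq p)) Δ (Δ x)) := congrArg T e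
  rw [← hl, ← hr] at e'
  exact e'

theorem conv_unit (hp : 2 ≤ p) (hΔ : IsCoprod p Δ) (ρ : Uq p →ₐ[ℂ] Matrix (Fin 1) (Fin 1) ℂ)
    (h : ρ (KK p) = XK p 1 1 ∧ ρ (EE p) = XE p 1 1 ∧ ρ (FF p) = XF 1) (ψ : Uq p →ₗ[ℂ] ℂ) :
    conv p Δ (chiOf p ρ) ψ = ψ := by
  have hKi := rho_Kinv p ρ _ h.1 (fun i => mul_ne_zero one_ne_zero (zpow_ne_zero _ (q_ne p)))
  have key : ∀ x, DL p Δ ρ x 0 0 = x := by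
    intro x
    induction x using Uq_ind p hp with
    | hE => rw [DL_E p Δ ρ hΔ, h.2.1]; simp [XE]
    | hF => rw [DL_F p Δ ρ hΔ, h.2.2, hKi]; simp [XF]
    | hK => rw [DL_K p Δ ρ hΔ, h.1]; simp [XK]
    | hc c => rw [AlgHom.commutes]; simp [Matrix.algebraMap_matrix_apply]
    | hadd x y hx hy => rw [map_add, Matrix.add_apply, hx, hy]
    | hmul x y hx hy => rw [map_mul, Matrix.mul_apply, Fin.sum_univ_one, hx, hy]
  ext x
  rw [conv_DL, Matrix.trace_fin_one, key]

end coassoc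

section final
variable (p : ℕ) (hp : 2 ≤ p) (Δ : Uq p →ₐ[ℂ] (Uq p ⊗[ℂ] Uq p))
variable (ρX : (α : ℂ) → (s : ℕ) → (Uq p →ₐ[ℂ] Matrix (Fin s) (Fin s) ℂ))
variable (ρP : (α : ℂ) → (s : ℕ) → (Uq p →ₐ[ℂ] Matrix (PIdx p s) (PIdx p s) ℂ))

theorem chi_G1 (hp : 2 ≤ p) (hX : IsXRep p ρX) (hP : IsPRep p ρP) (hΔ : IsCoprod p Δ) (m : ℕ) :
    (m ≤ p - 1 → conv p Δ (chiOf p (ρX 1 m)) (GOf p ρP 1) = GG p ρP m) ∧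
    (m + 1 ≤ p - 1 → conv p Δ (chiOf p (ρX 1 (m + 1))) (GOf p ρP 1) = GG p ρP (m + 1)) := by
  induction m with
  | zero =>
    refine ⟨fun _ => ?_, fun _ => ?_⟩
    · rw [chi_zero p 0 rfl, conv_zero_left, GG]
      have : qi p ((0 : ℕ) : ℤ) = 0 := qi_zero p
      rw [this, zero_smul]
    · have : qi p (((0 + 1 : ℕ)) : ℤ) = 1 := qi_one p hp
      rw [GG, this, one_smul]
      exact conv_unit p Δ hp hΔ (ρX 1 (0 + 1)) (hX 1 (Or.inl rfl) 1 le_rfl (by omega)) _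
  | succ m ih =>
    refine ⟨ih.2, fun hm => ?_⟩
    have e := C_chi p Δ ρX hp hX hΔ m (by omega)
    have e2 := congrArg (fun z => conv p Δ z (GOf p ρP 1)) e
    simp only [conv_add_left, conv_assoc p Δ hp hΔ] at e2
    rw [ih.1 (by omega), ih.2 (by omega), C_GG p Δ ρX ρP hp hX hP hΔ m (by omega)] at e2
    exact (add_right_cancel e2).symm

end final

/-- (i) `G_s = (1/[s]) χ^+_s G_1`; (ii) `χ^+_p G_1 = 0`;
(iii) `(χ^+_s + χ^-_{p-s}) G_t = 0`; (iv) `V = span(χ^+_s + χ^-_{p-s}, χ^+_p, χ^-_p)` is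
an ideal of `SLF(Ū_q)`. -/
theorem statement_16 (p : ℕ) (hp : 2 ≤ p)
    (ρX : (α : ℂ) → (s : ℕ) → (Uq p →ₐ[ℂ] Matrix (Fin s) (Fin s) ℂ))
    (hX : IsXRep p ρX)
    (ρP : (α : ℂ) → (s : ℕ) → (Uq p →ₐ[ℂ] Matrix (PIdx p s) (PIdx p s) ℂ))
    (hP : IsPRep p ρP)
    (Δ : Uq p →ₐ[ℂ] (Uq p ⊗[ℂ] Uq p)) (hΔ : IsCoprod p Δ) :
    (∀ s : ℕ, 1 ≤ s → s ≤ p - 1 →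
      GOf p ρP s = (qi p s)⁻¹ • conv p Δ (chiOf p (ρX 1 s)) (GOf p ρP 1))
    ∧ conv p Δ (chiOf p (ρX 1 p)) (GOf p ρP 1) = 0
    ∧ (∀ s t : ℕ, 1 ≤ s → s ≤ p - 1 → 1 ≤ t → t ≤ p - 1 →
        conv p Δ (chiOf p (ρX 1 s) + chiOf p (ρX (-1) (p - s))) (GOf p ρP t) = 0)
    ∧ (∀ φ : Uq p →ₗ[ℂ] ℂ, IsSLF p φ →
        ∀ v ∈ Vsub p ρX, conv p Δ φ v ∈ Vsub p ρX) := by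
  refine ⟨fun s h1 h2 => ?_, ?_, fun s t h1 h2 h3 h4 => ?_, fun φ hφ v hv => ?_⟩
  · rw [(chi_G1 p Δ ρX ρP hp hX hP hΔ s).1 h2, GG, smul_smul,
      inv_mul_cancel₀ (qi_ne p hp s (by omega) (by omega)), one_smul]
  · obtain ⟨a, b, _⟩ := G_props p hp ρX hX ρP hP 1 le_rfl (by omega)
    have e := zeta_eq p hp ρX hX (Or.inl rfl : (1 : ℂ) = 1 ∨ (1 : ℂ) = -1) p (by omega) le_rfl
    rw [chi_zero p (p - p) (by omega), add_zero] at e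
    rw [← e]
    exact conv_zeta_zero p hp Δ _ _ _ hΔ a b
  · obtain ⟨a, b, _⟩ := G_props p hp ρX hX ρP hP t h3 h4
    rw [← zeta_eq p hp ρX hX (Or.inl rfl) s h1 (by omega)]
    exact conv_zeta_zero p hp Δ _ _ _ hΔ a b
  · exact V_ideal p Δ φ ρX hp hΔ hX hφ v hv

end Uqsl2
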